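/- arXiv:1808.05435 — 2 statements merged into one kernel-verified Lean document; each statement's English description precedes it below -/
import Mathlib

section
/- Let A be a complex semisimple unital Banach algebra, let N be a nonempty open subset of A, and let a, b ∈ A. If σ(bx) is finite for all x ∈ N and σ'(ax) ⊆ σ'(bx) for all x ∈ N, then σ'(ax) ⊆ σ'(bx) for all x ∈ A. -/
open Complex

noncomputable section

/-- The nonzero spectrum `σ'(x) = σ(x) \ {0}` of an element of a complex algebra. -/
def nzSpec {A : Type*} [Ring A] [Algebra ℂ A] (x : A) : Set ℂ :=
  spectrum ℂ x \ {0}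

/-- The spectral rank of an element: `rank a = sup_{x ∈ A} #σ'(xa)`, valued in `ℕ∞`. -/
noncomputable def srank {A : Type*} [Ring A] [Algebra ℂ A] (a : A) : ℕ∞ :=
  ⨆ x : A, (nzSpec (x * a)).encard

/-- The socle of `A`: the set of finite-rank elements. -/
def socle (A : Type*) [Ring A] [Algebra ℂ A] : Set A :=
  {a : A | srank a ≠ ⊤}

/-- `A` is (Jacobson) semisimple: its Jacobson radical is `{0}`. -/
def JacobsonSemisimple (A : Type*) [Ring A] : Prop :=
  TwoSidedIdeal.jacobson (⊥ : TwoSidedIdeal A) = ⊥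

/-- `Soc A` is a minimal two-sided ideal: it is a nonzero two-sided ideal containing
no two-sided ideals other than `{0}` and itself. -/
def SocleIsMinimalTwoSidedIdeal (A : Type*) [Ring A] [Algebra ℂ A] : Prop :=
  ∃ I : TwoSidedIdeal A, (I : Set A) = socle A ∧ I ≠ ⊥ ∧
    ∀ J : TwoSidedIdeal A, J ≤ I → J = ⊥ ∨ J = I

/-- `A` is a prime algebra: all nonzero two-sided ideals `I, J` satisfy `IJ ≠ {0}`. -/
def IsPrimeAlgebra (A : Type*) [Ring A] : Prop :=
  ∀ I J : TwoSidedIdeal A, I ≠ ⊥ → J ≠ ⊥ → ∃ x ∈ I, ∃ y ∈ J, x * y ≠ 0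

/-- The left annihilator of the socle equals `{0}`. -/
def LeftAnnSocleTrivial (A : Type*) [Ring A] [Algebra ℂ A] : Prop :=
  {x : A | ∀ y ∈ socle A, x * y = 0} = {0}

open Filter Topology

/-- Uniform smallness of powers on the closed unit disc. -/
lemma aux_uniform {B : Type*} [NormedRing B] [NormOneClass B] [NormedAlgebra ℂ B] [CompleteSpace B]
    (g : ℂ → B) (hg : Continuous g)
    (h : ∀ z : ℂ, ‖z‖ ≤ 1 → spectrum ℂ (g z) ⊆ {0}) (δ : ℝ) (hδ : 0 < δ) :
    ∃ k : ℕ, ∀ z : ℂ, ‖z‖ ≤ 1 → ‖g z ^ (2 ^ k)‖ < δ ^ (2 ^ k) := by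
  have hmono : ∀ z, Monotone (fun k : ℕ => ‖g z ^ (2 ^ k)‖ < δ ^ (2 ^ k)) := by
    intro z
    refine monotone_nat_of_le_succ ?_
    intro k hk
    have : ‖g z ^ (2 ^ (k+1))‖ ≤ ‖g z ^ (2 ^ k)‖ ^ 2 := by
      rw [pow_succ 2 k, pow_mul]
      exact norm_pow_le _ _
    refine this.trans_lt ?_
    rw [pow_succ 2 k, pow_mul]
    exact pow_lt_pow_left₀ hk (norm_nonneg _) two_ne_zero
  have hpt : ∀ z : ℂ, ‖z‖ ≤ 1 → ∃ k : ℕ, ‖g z ^ (2 ^ k)‖ < δ ^ (2 ^ k) := by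
    intro z hz
    have hr : spectralRadius ℂ (g z) = 0 := by
      unfold spectralRadius
      simp only [ENNReal.iSup_eq_zero]
      intro k hk
      have := h z hz hk
      simp only [Set.mem_singleton_iff] at this
      simp [this]
    have ht := spectrum.pow_norm_pow_one_div_tendsto_nhds_spectralRadius (g z)
    rw [hr] at ht
    have h2 : Tendsto (fun k : ℕ => 2 ^ k) atTop atTop :=
      tendsto_pow_atTop_atTop_of_one_lt (one_lt_two : (1:ℕ) < 2)
    have h3 := (ht.comp h2).eventually (gt_mem_nhds (ENNReal.ofReal_pos.2 hδ))
    obtain ⟨k, hk⟩ := h3.exists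
    refine ⟨k, ?_⟩
    simp only [Function.comp] at hk
    rw [ENNReal.ofReal_lt_ofReal_iff hδ] at hk
    have hK : (2 ^ k : ℕ) ≠ 0 := by positivity
    have := pow_lt_pow_left₀ hk (by positivity) hK
    rwa [one_div, Real.rpow_inv_natCast_pow (norm_nonneg _) hK] at this
  have hc : IsCompact (Metric.closedBall (0:ℂ) 1) := isCompact_closedBall _ _
  obtain ⟨k, hk⟩ := hc.elim_directed_cover (fun k : ℕ => {z : ℂ | ‖g z ^ (2 ^ k)‖ < δ ^ (2 ^ k)})
    (fun k => isOpen_lt (hg.pow _).norm continuous_const)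
    (fun z hz => by
      obtain ⟨k, hk⟩ := hpt z (by simpa using hz)
      exact Set.mem_iUnion.2 ⟨k, hk⟩)
    (Monotone.directed_le fun i j hij z hz => hmono z hij hz)
  exact ⟨k, fun z hz => hk (by simpa using hz)⟩

lemma aux_spread {B : Type*} [NormedRing B] [NormOneClass B] [NormedAlgebra ℂ B] [CompleteSpace B]
    (g : ℂ → B) (hg : Differentiable ℂ g)
    (h : ∀ z : ℂ, ‖z‖ ≤ 1 → spectrum ℂ (g z) ⊆ {0}) (z : ℂ) : spectrum ℂ (g z) ⊆ {0} := by
  by_cases hz : ‖z‖ ≤ 1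
  · exact h z hz
  push Not at hz
  intro lam hlam
  have hz0 : z ≠ 0 := by
    rintro rfl
    simp at hz
    linarith
  set s : ℂ := Complex.log z with hs
  have hes : Complex.exp s = z := Complex.exp_log hz0
  have hsre : s.re = Real.log ‖z‖ := Complex.log_re z
  have hspos : 0 < s.re := by rw [hsre]; exact Real.log_pos hz
  set u : ℝ := 2 * s.re with hu
  have hu0 : 0 < u := by positivity
  obtain ⟨M, hM⟩ := (isCompact_closedBall (0:ℂ) (Real.exp u)).exists_bound_of_continuousOn
    hg.continuous.continuousOn
  set M' := max M 1
  have hM1 : 0 < M' := lt_of_lt_of_le one_pos (le_max_right _ _)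
  have hM' : ∀ w : ℂ, w.re ≤ u → ‖g (Complex.exp w)‖ ≤ M' := by
    intro w hw
    refine (hM _ ?_).trans (le_max_left _ _)
    simp [Complex.norm_exp, hw]
  have key : ∀ δ : ℝ, 0 < δ → ‖lam‖ ^ 2 ≤ δ * M' := by
    intro δ hδ
    obtain ⟨k, hk⟩ := aux_uniform g hg.continuous h δ hδ
    set K := 2 ^ k with hKdef
    have hK : K ≠ 0 := by positivity
    set f : ℂ → B := fun w => g (Complex.exp w) ^ K with hf
    have hfd : Differentiable ℂ f := (hg.comp Complex.differentiable_exp).pow K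
    have hb : ∀ w : ℂ, w.re ≤ u → ‖f w‖ ≤ M' ^ K := fun w hw =>
      (norm_pow_le _ _).trans (pow_le_pow_left₀ (norm_nonneg _) (hM' w hw) _)
    have h3 := Complex.HadamardThreeLines.norm_le_interp_of_mem_verticalClosedStrip' (f := f)
      (z := s) (a := δ ^ K) (b := M' ^ K) (l := 0) (u := u) hu0
      (by
        simp only [Complex.HadamardThreeLines.verticalClosedStrip, Set.mem_preimage, Set.mem_Icc]
        constructor <;> linarith) hfd.diffContOnCl
      (by
        refine ⟨M' ^ K, ?_⟩
        rintro _ ⟨w, hw, rfl⟩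
        exact hb w hw.2)
      (by
        intro w hw
        refine (hk _ ?_).le
        simp only [Set.mem_preimage, Set.mem_singleton_iff] at hw
        simp [Complex.norm_exp, hw])
      (by
        intro w hw
        exact hb w (le_of_eq hw))
    have hhalf : (s.re - 0) / (u - 0) = 1/2 := by
      rw [hu]; field_simp; ring
    rw [hhalf] at h3
    have h4 : ‖lam‖ ^ K ≤ ‖f s‖ := by
      rw [← norm_pow]
      apply spectrum.norm_le_norm_of_mem
      simp only [hf, hes]
      exact spectrum.pow_image_subset _ _ ⟨lam, hlam, rfl⟩
    have h5 : (‖lam‖ ^ 2) ^ K ≤ (δ * M') ^ K := by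
      have e : (δ ^ K) ^ (1 - 1/2 : ℝ) * (M' ^ K) ^ (1/2 : ℝ) = Real.sqrt (δ^K * M'^K) := by
        rw [Real.sqrt_eq_rpow, Real.mul_rpow (by positivity) (by positivity)]
        norm_num
      rw [e] at h3
      have h6 := h4.trans h3
      calc (‖lam‖ ^ 2) ^ K = (‖lam‖ ^ K) ^ 2 := by rw [← pow_mul, ← pow_mul, mul_comm]
        _ ≤ (Real.sqrt (δ^K * M'^K)) ^ 2 := pow_le_pow_left₀ (by positivity) h6 _
        _ = _ := by rw [Real.sq_sqrt (by positivity), mul_pow]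
    exact le_of_pow_le_pow_left₀ hK (by positivity) h5
  have h0 : ‖lam‖ ^ 2 ≤ 0 := by
    by_contra hne
    push Not at hne
    have := key (‖lam‖^2 / (2 * M')) (by positivity)
    have e : ‖lam‖^2 / (2 * M') * M' = ‖lam‖^2 / 2 := by field_simp
    rw [e] at this
    linarith
  have : ‖lam‖ = 0 := by nlinarith [norm_nonneg lam]
  simpa using this

/-- Commuting elements: product of linear forms. -/
lemma aux_comm {B : Type*} [NormedRing B] [NormedAlgebra ℂ B] [CompleteSpace B]
    {ι : Type*} [Fintype ι] (t : ι → B) (hcomm : ∀ i j, t i * t j = t j * t i)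
    (L : List (ι → ℂ))
    (h : ∀ μ : ι → ℂ, (∀ i, μ i ∈ spectrum ℂ (t i)) → ∃ l ∈ L, ∑ i, l i * μ i = 0) :
    spectrum ℂ (L.map (fun l => ∑ i, l i • t i)).prod ⊆ {0} := by
  set C : Subalgebra ℂ B := Subalgebra.centralizer ℂ
    ((Subalgebra.centralizer ℂ (Set.range t) : Subalgebra ℂ B) : Set B) with hC
  have htC' : ∀ i, t i ∈ Subalgebra.centralizer ℂ (Set.range t) := by
    intro i
    rw [Subalgebra.mem_centralizer_iff]
    rintro _ ⟨j, rfl⟩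
    exact hcomm j i
  have hle : C ≤ Subalgebra.centralizer ℂ (Set.range t) := by
    refine Subalgebra.centralizer_le _ _ _ ?_
    rintro _ ⟨j, rfl⟩
    exact htC' j
  have htC : ∀ i, t i ∈ C := by
    intro i
    rw [hC, Subalgebra.mem_centralizer_iff]
    intro g hg
    exact ((Subalgebra.mem_centralizer_iff ℂ).1 hg _ ⟨i, rfl⟩).symm
  have hmc : ∀ x y : C, x * y = y * x := by
    intro x y
    apply Subtype.ext
    exact (((Subalgebra.mem_centralizer_iff ℂ).1 x.2) _ (hle y.2)).symm
  have hcl : IsClosed (C : Set B) := by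
    rw [hC, Subalgebra.coe_centralizer]
    exact Set.isClosed_centralizer _
  have : CompleteSpace C := hcl.completeSpace_coe
  have hunit : ∀ x : C, IsUnit (x : B) → IsUnit x := by
    rintro x ⟨v, hv⟩
    have hinv : ((v⁻¹ : Bˣ) : B) ∈ C := by
      rw [hC, Subalgebra.mem_centralizer_iff]
      intro g hg
      have hx := ((Subalgebra.mem_centralizer_iff ℂ).1 x.2) g hg
      rw [← hv] at hx
      exact (Commute.units_inv_right (show Commute g (v:B) from hx))
    refine ⟨⟨x, ⟨_, hinv⟩, ?_, ?_⟩, rfl⟩ <;> apply Subtype.ext <;> simp [← hv]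
  have hspec : ∀ x : C, spectrum ℂ x ⊆ spectrum ℂ (x : B) := by
    intro x z hz hz'
    exact hz (hunit _ hz')
  let _ : NormedCommRing C := { (inferInstance : NormedRing C) with mul_comm := hmc }
  set G : C := (L.map (fun l => ∑ i, l i • (⟨t i, htC i⟩ : C))).prod with hG
  have hGc : (G : B) = (L.map (fun l => ∑ i, l i • t i)).prod := by
    rw [hG]
    change C.val _ = _
    rw [map_list_prod, List.map_map]
    congr 1
    apply List.map_congr_left
    intro l _
    simp
  rw [← hGc]
  refine (?_ : spectrum ℂ (G : B) ⊆ spectrum ℂ G).trans ?_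
  · exact AlgHom.spectrum_apply_subset C.val G
  intro z hz
  obtain ⟨f, hf⟩ := WeakDual.CharacterSpace.mem_spectrum_iff_exists.1 hz
  obtain ⟨l, hl, hl0⟩ := h (fun i => f ⟨t i, htC i⟩) (fun i => hspec _
    (WeakDual.CharacterSpace.mem_spectrum_iff_exists.2 ⟨f, rfl⟩))
  rw [Set.mem_singleton_iff, ← hf, hG, map_list_prod, List.map_map]
  apply List.prod_eq_zero
  rw [List.mem_map]
  refine ⟨l, hl, ?_⟩
  simp only [Function.comp, map_sum, map_smul, smul_eq_mul]
  exact hl0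

section ops
variable {A : Type*} [NormedRing A] [NormedAlgebra ℂ A] {ι : Type*} [Fintype ι] [DecidableEq ι]

/-- Apply an operator in the `i`-th variable of a multilinear form. -/
noncomputable def EE (A : Type*) [NormedRing A] [NormedAlgebra ℂ A] {ι : Type*} [Fintype ι]
    [DecidableEq ι] (i : ι) : (A →L[ℂ] A) →L[ℂ]
    (ContinuousMultilinearMap ℂ (fun _ : ι => A) ℂ →L[ℂ]
      ContinuousMultilinearMap ℂ (fun _ : ι => A) ℂ) :=
  (ContinuousMultilinearMap.compContinuousLinearMapContinuousMultilinear ℂ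
    (fun _ : ι => A) (fun _ : ι => A) ℂ).toContinuousLinearMap
      (fun _ => ContinuousLinearMap.id ℂ A) i

lemma EE_apply (i : ι) (u : A →L[ℂ] A) (Φ : ContinuousMultilinearMap ℂ (fun _ : ι => A) ℂ)
    (m : ι → A) : EE A i u Φ m = Φ (Function.update m i (u (m i))) := by
  change Φ (fun j => (Function.update (fun _ => ContinuousLinearMap.id ℂ A) i u j) (m j)) = _
  congr 1
  ext j
  by_cases h : j = i
  · subst h; simp
  · simp [h]

lemma EE_comm {i j : ι} (hij : i ≠ j) (u v : A →L[ℂ] A) : EE A i u * EE A j v = EE A j v * EE A i u := by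
  ext Φ m
  simp only [mul_apply_eq_comp, EE_apply]
  rw [Function.update_of_ne hij.symm, Function.update_of_ne hij, Function.update_comm hij]

lemma EE_mul (i : ι) (u v : A →L[ℂ] A) : EE A i u * EE A i v = EE A i (v * u) := by
  ext Φ m
  simp only [mul_apply_eq_comp, EE_apply]
  simp

lemma EE_one (i : ι) : EE A i 1 = 1 := by
  ext Φ m
  simp [EE_apply]

lemma EE_spec (i : ι) (S : A →L[ℂ] (A →L[ℂ] A))
    (hS : S = ContinuousLinearMap.mul ℂ A ∨ S = (ContinuousLinearMap.mul ℂ A).flip) (w : A) :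
    spectrum ℂ (EE A i (S w)) ⊆ spectrum ℂ w := by
  intro z hz hz'
  apply hz
  obtain ⟨v, hv⟩ := hz'
  have h1 : S 1 = 1 := by
    rcases hS with rfl | rfl <;> ext y <;> simp
  have h2 : ∀ p q : A, p * q = 1 → q * p = 1 → S p * S q = 1 := by
    intro p q hpq hqp
    rcases hS with rfl | rfl <;> ext y <;> simp [← mul_assoc, hpq]
    simp [mul_assoc, hqp]
  have h3 : z • 1 - EE A i (S w) = EE A i (S (v : A)) := by
    rw [hv, Algebra.algebraMap_eq_smul_one]
    simp only [map_sub, map_smul, h1, EE_one]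
  rw [spectrum.mem_resolventSet_iff, Algebra.algebraMap_eq_smul_one, h3]
  refine ⟨⟨EE A i (S v), EE A i (S (v⁻¹ : Aˣ)), ?_, ?_⟩, rfl⟩
  · rw [EE_mul, h2 _ _ (by simp) (by simp), EE_one]
  · rw [EE_mul, h2 _ _ (by simp) (by simp), EE_one]

lemma exists_functional [CompleteSpace A] [Nontrivial A] (w : A) (z : ℂ) (hz : z ∈ spectrum ℂ w) :
    ∃ S : A →L[ℂ] (A →L[ℂ] A),
      (S = ContinuousLinearMap.mul ℂ A ∨ S = (ContinuousLinearMap.mul ℂ A).flip) ∧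
      ∃ φ : A →L[ℂ] ℂ, φ 1 ≠ 0 ∧ ∀ y, φ (S w y) = z * φ y := by
  have main : ∀ S : A →L[ℂ] (A →L[ℂ] A), S 1 = 1 →
      (∀ y, ¬ IsUnit (S (algebraMap ℂ A z - w) y)) → 
      ∃ φ : A →L[ℂ] ℂ, φ 1 ≠ 0 ∧ ∀ y, φ (S w y) = z * φ y := by
    intro S h1 hS
    set p : Submodule ℂ A :=
      (LinearMap.range (S (algebraMap ℂ A z - w)).toLinearMap).topologicalClosure with hp
    have hpc : IsClosed (p : Set A) := Submodule.isClosed_topologicalClosure _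
    have h1p : (1 : A) ∉ p := by
      intro h
      have h' : (1 : A) ∈ closure (Set.range (S (algebraMap ℂ A z - w))) := h
      obtain ⟨_, hx, y, rfl⟩ := mem_closure_iff_nhds.1 h' _
        (Units.isOpen.mem_nhds (show IsUnit (1:A) from isUnit_one))
      exact hS y hx
    have hq : p.mkQ 1 ≠ 0 := by
      simpa using h1p
    obtain ⟨f, hf⟩ := SeparatingDual.exists_ne_zero (R := ℂ) hq
    refine ⟨f.comp p.mkQL, by simpa using hf, fun y => ?_⟩
    have hmem : S (algebraMap ℂ A z - w) y ∈ p := 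
      Submodule.le_topologicalClosure _ ⟨y, rfl⟩
    have h0 : p.mkQL (S (algebraMap ℂ A z - w) y) = 0 :=
      (Submodule.Quotient.mk_eq_zero p).2 hmem
    have h2 : S (algebraMap ℂ A z - w) y = z • y - S w y := by
      rw [Algebra.algebraMap_eq_smul_one]
      simp [h1]
    have h3 : f (p.mkQL (z • y - S w y)) = 0 := by rw [← h2, h0, map_zero]
    rw [map_sub, map_sub, map_smul, map_smul, sub_eq_zero] at h3
    exact h3.symm
  by_cases hL : ∃ y, IsUnit ((algebraMap ℂ A z - w) * y)
  · refine ⟨_, Or.inr rfl, main _ (by ext y; simp) ?_⟩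
    rintro y' hy'
    obtain ⟨y, ⟨u, hu⟩⟩ := hL
    obtain ⟨u', hu'⟩ := hy'
    simp only [ContinuousLinearMap.flip_apply, ContinuousLinearMap.mul_apply'] at hu'
    apply hz
    set d := algebraMap ℂ A z - w
    have e1 : d * (y * (u⁻¹ : Aˣ)) = 1 := by rw [← mul_assoc, ← hu]; simp
    have e2 : ((u'⁻¹ : Aˣ) * y') * d = 1 := by rw [mul_assoc, ← hu']; simp
    exact isUnit_iff_exists_and_exists.2 ⟨⟨_, e1⟩, ⟨_, e2⟩⟩
  · refine ⟨_, Or.inl rfl, main _ (by ext y; simp) ?_⟩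
    intro y hy
    exact hL ⟨y, hy⟩

end ops

lemma line_spread {A : Type*} [NormedRing A] [NormedAlgebra ℂ A]
    {B : Type*} [NormedRing B] [NormOneClass B] [NormedAlgebra ℂ B] [CompleteSpace B]
    {ι : Type*} [Fintype ι] (t : ι → A →L[ℂ] B) (L : List (ι → ℂ))
    (N : Set A) (hN : IsOpen N) (hNne : N.Nonempty)
    (hloc : ∀ y ∈ N, spectrum ℂ (L.map (fun l => ∑ i, l i • t i y)).prod ⊆ {0}) (x : A) :
    spectrum ℂ (L.map (fun l => ∑ i, l i • t i x)).prod ⊆ {0} := by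
  set G : A → B := fun y => (L.map (fun l => ∑ i, l i • t i y)).prod with hG
  have hGd : Differentiable ℂ G := by
    rw [hG]
    clear hloc hG G
    induction L with
    | nil => simp
    | cons l L ih =>
      simp only [List.map_cons, List.prod_cons]
      refine Differentiable.mul ?_ ih
      exact Differentiable.fun_sum fun i _ => (t i).differentiable.const_smul (l i)
  -- the line
  obtain ⟨x0, hx0⟩ := hNne
  obtain ⟨ε, hε, hball⟩ := Metric.isOpen_iff.1 hN x0 hx0
  set r : ℝ := ε / (2 * (‖x - x0‖ + 1)) with hr
  have hrpos : 0 < r := by positivity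
  set ln : ℂ → A := fun z => x0 + z • ((r : ℂ) • (x - x0)) with hln
  have hlnd : Differentiable ℂ ln := by
    rw [hln]
    fun_prop
  have hall := aux_spread (fun z => G (ln z)) (hGd.comp hlnd) (by
    intro z hz
    apply hloc
    apply hball
    rw [Metric.mem_ball, dist_eq_norm, hln]
    simp only [add_sub_cancel_left, norm_smul]
    have e1 : ‖(r:ℂ)‖ = r := by simp [abs_of_pos hrpos]
    rw [e1]
    have e2 : r * ‖x - x0‖ < ε := by
      rw [hr, div_mul_eq_mul_div, div_lt_iff₀ (by positivity)]
      nlinarith [norm_nonneg (x - x0)]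
    have : 0 ≤ r * ‖x - x0‖ := by positivity
    nlinarith [norm_nonneg z]) ((r:ℂ)⁻¹)
  have hlnx : ln ((r:ℂ)⁻¹) = x := by
    rw [hln]
    have : (r:ℂ) ≠ 0 := by exact_mod_cast hrpos.ne'
    simp only [smul_smul, inv_mul_cancel₀ this, one_smul]
    abel
  simp only [hlnx] at hall
  exact hall

lemma eigen_mem {X : Type*} [NormedAddCommGroup X] [NormedSpace ℂ X] {ι : Type*} [Fintype ι]
    (t : ι → X →L[ℂ] X) (μ : ι → ℂ) (Φ : X) (hΦ0 : Φ ≠ 0) (hte : ∀ i, t i Φ = μ i • Φ)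
    (L : List (ι → ℂ)) :
    (L.map (fun l => ∑ i, l i * μ i)).prod ∈ spectrum ℂ (L.map (fun l => ∑ i, l i • t i)).prod := by
  have hGe : (L.map (fun l => ∑ i, l i • t i)).prod Φ
      = (L.map (fun l => ∑ i, l i * μ i)).prod • Φ := by
    induction L with
    | nil => simp
    | cons l L ih =>
      simp only [List.map_cons, List.prod_cons, mul_apply_eq_comp]
      rw [ih, map_smul, sum_apply]
      simp only [smul_apply, hte, smul_smul]
      rw [← Finset.sum_smul, smul_smul, mul_comm]
  rintro ⟨v, hv⟩
  apply hΦ0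
  have h0 : (v : X →L[ℂ] X) Φ = 0 := by
    rw [hv, sub_apply, hGe, Algebra.algebraMap_eq_smul_one]
    simp
  have h1 : (((v⁻¹ : (X →L[ℂ] X)ˣ) : X →L[ℂ] X) * (v : X →L[ℂ] X)) Φ = 0 := by
    rw [mul_apply_eq_comp, h0, map_zero]
  simpa using h1

lemma EE_eigen {A : Type*} [NormedRing A] [NormedAlgebra ℂ A] {ι : Type*} [Fintype ι]
    [DecidableEq ι] (φ : ι → A →L[ℂ] ℂ) (i : ι) (u : A →L[ℂ] A) (z : ℂ)
    (h : ∀ y, φ i (u y) = z * φ i y) :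
    EE A i u ((ContinuousMultilinearMap.mkPiAlgebra ℂ ι ℂ).compContinuousLinearMap φ) =
      z • ((ContinuousMultilinearMap.mkPiAlgebra ℂ ι ℂ).compContinuousLinearMap φ) := by
  ext m
  rw [EE_apply]
  simp only [smul_apply, smul_eq_mul,
    ContinuousMultilinearMap.compContinuousLinearMap_apply,
    ContinuousMultilinearMap.mkPiAlgebra_apply]
  rw [← Finset.mul_prod_erase _ _ (Finset.mem_univ i),
    ← Finset.mul_prod_erase _ (fun j => φ j (m j)) (Finset.mem_univ i)]
  simp only [Function.update_self, h, mul_assoc]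
  congr 2
  apply Finset.prod_congr rfl
  intro j hj
  rw [Function.update_of_ne (Finset.ne_of_mem_erase hj)]

lemma key_abstract {A : Type*} [NormedRing A] [NormedAlgebra ℂ A]
    {X : Type*} [NormedAddCommGroup X] [NormedSpace ℂ X] [CompleteSpace X]
    {ι : Type*} [Fintype ι] (c : ι → A) (L : List (ι → ℂ))
    (N : Set A) (hN : IsOpen N) (hNne : N.Nonempty)
    (h : ∀ x ∈ N, ∀ μ : ι → ℂ, (∀ i, μ i ∈ spectrum ℂ (c i * x)) → ∃ l ∈ L, ∑ i, l i * μ i = 0)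
    (x : A) (μ : ι → ℂ) (t : ι → A →L[ℂ] (X →L[ℂ] X))
    (hcomm : ∀ i j y, t i y * t j y = t j y * t i y)
    (hspec : ∀ i y, spectrum ℂ (t i y) ⊆ spectrum ℂ (c i * y))
    (Φ : X) (hΦ0 : Φ ≠ 0) (hte : ∀ i, t i x Φ = μ i • Φ) : ∃ l ∈ L, ∑ i, l i * μ i = 0 := by
  have : Nontrivial X := ⟨Φ, 0, hΦ0⟩
  have hmem := eigen_mem (fun i => t i x) μ Φ hΦ0 hte L
  have hall := line_spread t L N hN hNne
    (fun y hy => aux_comm (fun i => t i y) (fun i j => hcomm i j y) L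
      (fun ν hν => h y hy ν fun i => hspec i y (hν i))) x
  have h0 := hall hmem
  rw [Set.mem_singleton_iff, List.prod_eq_zero_iff, List.mem_map] at h0
  exact h0

/-- Key lemma. -/
lemma key_spread {A : Type*} [NormedRing A] [NormedAlgebra ℂ A] [CompleteSpace A] [Nontrivial A]
    {ι : Type*} [Fintype ι] [DecidableEq ι] (c : ι → A) (L : List (ι → ℂ))
    (N : Set A) (hN : IsOpen N) (hNne : N.Nonempty)
    (h : ∀ x ∈ N, ∀ μ : ι → ℂ, (∀ i, μ i ∈ spectrum ℂ (c i * x)) → ∃ l ∈ L, ∑ i, l i * μ i = 0)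
    (x : A) (μ : ι → ℂ) (hμ : ∀ i, μ i ∈ spectrum ℂ (c i * x)) : ∃ l ∈ L, ∑ i, l i * μ i = 0 := by
  choose S hS φ hφ1 hφ using fun i => exists_functional (c i * x) (μ i) (hμ i)
  obtain ⟨Φ, hΦ⟩ : ∃ Φ, Φ =
    (ContinuousMultilinearMap.mkPiAlgebra ℂ ι ℂ).compContinuousLinearMap φ := ⟨_, rfl⟩
  have hΦ0 : Φ ≠ 0 := by
    intro h0
    have : Φ (fun _ => 1) = 0 := by rw [h0]; rfl
    rw [hΦ, ContinuousMultilinearMap.compContinuousLinearMap_apply,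
      ContinuousMultilinearMap.mkPiAlgebra_apply, Finset.prod_eq_zero_iff] at this
    obtain ⟨i, _, hi⟩ := this
    exact hφ1 i hi
  refine key_abstract c L N hN hNne h x μ
    (fun i => (EE A i).comp ((S i).comp (ContinuousLinearMap.mul ℂ A (c i)))) ?_ ?_ Φ hΦ0 ?_
  · intro i j y
    by_cases hij : i = j
    · subst hij; rfl
    · exact EE_comm hij (S i (c i * y)) (S j (c j * y))
  · intro i y
    exact EE_spec i (S i) (hS i) (c i * y)
  · intro i
    rw [hΦ]
    exact EE_eigen φ i (S i (c i * x)) _ (hφ i)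

lemma persist {A : Type*} [NormedRing A] [NormedAlgebra ℂ A] [CompleteSpace A] [Nontrivial A]
    (w : A) (hw : (spectrum ℂ w).Finite) (α : ℂ) (hα : α ∈ spectrum ℂ w) (ε : ℝ) (hε : 0 < ε) :
    ∀ᶠ w' in 𝓝 w, ∃ α' ∈ spectrum ℂ w', ‖α' - α‖ < ε := by
  have h1 : (spectrum ℂ w \ {α})ᶜ ∈ 𝓝 α :=
    (hw.subset Set.sdiff_subset).isClosed.isOpen_compl.mem_nhds (by simp)
  obtain ⟨r0, hr0, hb⟩ := Metric.mem_nhds_iff.1 h1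
  set r := min r0 ε / 2 with hr
  have hrpos : 0 < r := by positivity
  have hrr0 : r < r0 := by
    have := min_le_left r0 ε
    have : 0 < min r0 ε := by positivity
    rw [hr]; linarith
  have hrε : r < ε := by
    have := min_le_right r0 ε
    have : 0 < min r0 ε := by positivity
    rw [hr]; linarith
  have hunit : ∀ z ∈ Metric.sphere α r, IsUnit (algebraMap ℂ A z - w) := by
    intro z hz
    by_contra hcon
    have hz' : z ∈ Metric.ball α r0 := by
      rw [Metric.mem_ball, Metric.mem_sphere.1 hz]; exact hrr0
    apply hb hz'
    refine ⟨hcon, ?_⟩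
    rintro rfl
    simp at hz
    linarith
  set F : A × ℂ → A := fun p => Ring.inverse (algebraMap ℂ A p.2 - p.1) with hF
  have hsub : Continuous (fun p : A × ℂ => algebraMap ℂ A p.2 - p.1) := by
    exact ((continuous_algebraMap ℂ A).comp continuous_snd).sub continuous_fst
  have hFc : ∀ w' z, IsUnit (algebraMap ℂ A z - w') → ContinuousAt F (w', z) := by
    intro w' z ⟨u, hu⟩
    have hi := NormedRing.inverse_continuousAt u
    rw [hu] at hi
    exact ContinuousAt.comp (f := fun p : A × ℂ => algebraMap ℂ A p.2 - p.1) (x := (w', z))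
      hi hsub.continuousAt
  obtain ⟨C0, hC0⟩ := (isCompact_sphere α r).exists_bound_of_continuousOn
    (f := fun z => F (w, z)) (fun z hz => by
      have := (hFc w z (hunit z hz))
      exact (ContinuousAt.comp (f := fun z : ℂ => (w, z)) this
        (by fun_prop)).continuousWithinAt)
  set C := max C0 0 + 1 with hC
  have hCpos : 0 < C := by positivity
  have hev : ∀ᶠ w' in 𝓝 w, ∀ z ∈ Metric.sphere α r, ‖F (w', z)‖ < C := by
    refine (isCompact_sphere α r).eventually_forall_of_forall_eventually ?_
    intro z hz
    have hc : ContinuousAt (fun p => ‖F p‖) (w, z) := (hFc w z (hunit z hz)).norm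
    refine hc.eventually (gt_mem_nhds ?_)
    have := hC0 z hz
    have := le_max_left C0 0
    rw [hC]; linarith
  have hev2 : ∀ᶠ w' in 𝓝 w, ‖w' - w‖ < C⁻¹ := by
    have := Metric.ball_mem_nhds w (inv_pos.2 hCpos)
    filter_upwards [this] with w' hw'
    rwa [← dist_eq_norm]
  filter_upwards [hev, hev2] with w' h2 h3
  by_contra hcon
  push Not at hcon
  have hun : ∀ z, ‖z - α‖ ≤ r → IsUnit (algebraMap ℂ A z - w') := by
    intro z hz
    by_contra h
    have := hcon z h
    linarith
  have hd : ∀ z ∈ Metric.closedBall α r, DifferentiableAt ℂ (fun z => F (w', z)) z := by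
    intro z hz
    have hu := hun z (by rwa [← dist_eq_norm])
    have h4 := differentiableAt_inverse (𝕜 := ℂ) hu
    refine DifferentiableAt.comp (f := fun z : ℂ => algebraMap ℂ A z - w') z h4 ?_
    refine DifferentiableAt.sub_const ?_ _
    have : (algebraMap ℂ A : ℂ → A) = fun z => z • (1 : A) := by
      ext z; exact Algebra.algebraMap_eq_smul_one z
    rw [this]
    fun_prop
  have hmax : ‖F (w', α)‖ ≤ C := by
    refine Complex.norm_le_of_forall_mem_frontier_norm_le (f := fun z => F (w', z))
      (U := Metric.ball α r) Metric.isBounded_ball ?_ (C := C) ?_ ?_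
    · refine DifferentiableOn.diffContOnCl ?_
      intro z hz
      exact (hd z (Metric.closure_ball_subset_closedBall hz)).differentiableWithinAt
    · intro z hz
      rw [frontier_ball α hrpos.ne'] at hz
      exact (h2 z hz).le
    · exact subset_closure (Metric.mem_ball_self hrpos)
  obtain ⟨u, hu⟩ := hun α (by simpa using hrpos.le)
  have hFu : F (w', α) = ((u⁻¹ : Aˣ) : A) := by
    rw [hF]; simp only; rw [← hu, Ring.inverse_unit]
  rw [hFu] at hmax
  have hpos : 0 < ‖((u⁻¹ : Aˣ) : A)‖ := norm_pos_iff.2 (Units.ne_zero _)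
  have h5 : ‖w' - w‖ < ‖((u⁻¹ : Aˣ) : A)‖⁻¹ :=
    h3.trans_le (inv_anti₀ hpos hmax)
  apply hα
  refine ⟨u.add (w' - w) h5, ?_⟩
  rw [Units.val_add, hu]
  abel

/-- There are distinct nonzero spectral values of the `c i * x`. -/
def DD {A : Type*} [Ring A] [Algebra ℂ A] {ι : Type*} (c : ι → A) (x : A) : Prop :=
  ∃ μ : ι → ℂ, Function.Injective μ ∧ ∀ i, μ i ∈ nzSpec (c i * x)

lemma DD_spread {A : Type*} [NormedRing A] [NormedAlgebra ℂ A] [CompleteSpace A] [Nontrivial A]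
    {ι : Type*} [Fintype ι] [DecidableEq ι] (c : ι → A)
    (N : Set A) (hN : IsOpen N) (hNne : N.Nonempty)
    (h : ∀ x ∈ N, ¬ DD c x) (x : A) : ¬ DD c x := by
  set lf : ι × ι → (ι → ℂ) := fun p => if p.1 = p.2 then Pi.single p.1 1
    else Pi.single p.1 1 - Pi.single p.2 1 with hlf
  have hsum : ∀ (p : ι × ι) (μ : ι → ℂ), ∑ i, lf p i * μ i = if p.1 = p.2 then μ p.1 else μ p.1 - μ p.2 := by
    intro p μ
    rw [hlf]
    by_cases hp : p.1 = p.2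
    · simp only [hp, if_true]
      simp [Pi.single_apply]
    · simp only [hp, if_false]
      simp [Pi.single_apply, sub_mul, Finset.sum_sub_distrib]
  rintro ⟨μ, hinj, hμ⟩
  obtain ⟨l, hl, h0⟩ := key_spread c ((Finset.univ : Finset (ι × ι)).toList.map lf) N hN hNne (by
    intro y hy ν hν
    by_contra hcon
    push Not at hcon
    have hc : ∀ p : ι × ι, (if p.1 = p.2 then ν p.1 else ν p.1 - ν p.2) ≠ 0 := by
      intro p
      rw [← hsum]
      exact hcon _ (List.mem_map.2 ⟨p, by simp, rfl⟩)
    refine h y hy ⟨ν, ?_, ?_⟩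
    · intro i j hij
      by_contra hne
      have := hc (i, j)
      simp [hne, hij] at this
    · intro i
      refine ⟨hν i, ?_⟩
      have := hc (i, i)
      simpa using this) x μ (fun i => (hμ i).1)
  obtain ⟨p, _, rfl⟩ := List.mem_map.1 hl
  rw [hsum] at h0
  split_ifs at h0 with hp
  · exact (hμ p.1).2 h0
  · exact hp (hinj (sub_eq_zero.1 h0))

lemma DD_open {A : Type*} [NormedRing A] [NormedAlgebra ℂ A] [CompleteSpace A] [Nontrivial A]
    {k : ℕ} (b x : A) (hfin : (spectrum ℂ (b * x)).Finite)
    (h : DD (fun _ : Fin k => b) x) : ∀ᶠ y in 𝓝 x, DD (fun _ : Fin k => b) y := by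
  obtain ⟨μ, hinj, hμ⟩ := h
  -- choose a separation
  obtain ⟨ε, hε, h0, hs⟩ : ∃ ε : ℝ, 0 < ε ∧ (∀ i, ε ≤ ‖μ i‖) ∧
      ∀ i j, i ≠ j → 2 * ε ≤ ‖μ i - μ j‖ := by
    have e1 : ∀ᶠ ε : ℝ in 𝓝[>] 0, ∀ i, ε ≤ ‖μ i‖ := by
      rw [eventually_all]
      intro i
      have : 0 < ‖μ i‖ := norm_pos_iff.2 (hμ i).2
      filter_upwards [mem_nhdsWithin_of_mem_nhds (gt_mem_nhds this)] with ε he using he.le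
    have e2 : ∀ᶠ ε : ℝ in 𝓝[>] 0, ∀ i j, i ≠ j → 2 * ε ≤ ‖μ i - μ j‖ := by
      rw [eventually_all]
      intro i
      rw [eventually_all]
      intro j
      by_cases hij : i = j
      · simp [hij]
      · have : 0 < ‖μ i - μ j‖ / 2 :=
          half_pos (norm_pos_iff.2 (sub_ne_zero.2 (hinj.ne hij)))
        filter_upwards [mem_nhdsWithin_of_mem_nhds (gt_mem_nhds this)] with ε he _
        linarith [show ε < _ from he]
    obtain ⟨ε, ⟨h1, h2⟩, h3⟩ := ((e1.and e2).and self_mem_nhdsWithin).exists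
    exact ⟨ε, h3, h1, h2⟩
  have hc : Tendsto (fun y => b * y) (𝓝 x) (𝓝 (b * x)) := (continuous_const_mul b).tendsto x
  have hall : ∀ᶠ y in 𝓝 x, ∀ i, ∃ α' ∈ spectrum ℂ (b * y), ‖α' - μ i‖ < ε := by
    rw [eventually_all]
    intro i
    exact hc.eventually (persist (b * x) hfin (μ i) (hμ i).1 ε hε)
  filter_upwards [hall] with y hy
  choose ν hν hνd using hy
  refine ⟨ν, ?_, fun i => ⟨hν i, ?_⟩⟩
  · intro i j hij
    by_contra hne
    have h1 := hs i j hne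
    have h2 : ‖μ i - μ j‖ ≤ ‖ν i - μ i‖ + ‖ν j - μ j‖ := by
      have : μ i - μ j = (ν j - μ j) - (ν i - μ i) := by rw [hij]; ring
      rw [this, add_comm]
      exact norm_sub_le _ _
    linarith [hνd i, hνd j]
  · intro hz
    rw [Set.mem_singleton_iff] at hz
    have := hνd i
    rw [hz, zero_sub, norm_neg] at this
    linarith [h0 i]

lemma DD_of_encard {A : Type*} [Ring A] [Algebra ℂ A] {k : ℕ} {b x : A}
    (h : ¬ DD (fun _ : Fin k => b) x) : (nzSpec (b * x)).Finite := by
  by_contra hinf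
  have hinf' : (nzSpec (b * x)).Infinite := hinf
  have := hinf'.to_subtype
  refine h ⟨fun i => (Infinite.natEmbedding (nzSpec (b * x)) i : ℂ), ?_, fun i => Subtype.coe_prop _⟩
  intro i j hij
  exact Fin.ext ((Infinite.natEmbedding _).injective (Subtype.ext hij))

lemma exists_not_DD {A : Type*} [Ring A] [Algebra ℂ A] {b x : A}
    (h : (nzSpec (b * x)).Finite) : ∃ k, ¬ DD (fun _ : Fin k => b) x := by
  have := h.fintype
  refine ⟨Fintype.card (nzSpec (b * x)) + 1, ?_⟩
  rintro ⟨μ, hinj, hμ⟩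
  have h2 := Fintype.card_le_of_injective (fun i => (⟨μ i, hμ i⟩ : nzSpec (b * x)))
    (fun i j hij => hinj (congrArg Subtype.val hij))
  simp at h2

theorem nzSpec_subset_all_of_subset_on_open
    {A : Type*} [NormedRing A] [NormOneClass A] [NormedAlgebra ℂ A] [CompleteSpace A]
    (hss : JacobsonSemisimple A) (N : Set A) (hN : IsOpen N) (hNne : N.Nonempty)
    (a b : A)
    (hfin : ∀ x ∈ N, (spectrum ℂ (b * x)).Finite)
    (hsub : ∀ x ∈ N, nzSpec (a * x) ⊆ nzSpec (b * x)) :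
    ∀ x : A, nzSpec (a * x) ⊆ nzSpec (b * x) := by
  have : Nontrivial A := NormOneClass.nontrivial
  -- Baire
  have hbaire : ∃ m, ∀ x, ¬ DD (fun _ : Fin m => b) x := by
    have hd := dense_iUnion_interior_of_closed
      (f := fun k : ℕ => closure {x : A | ¬ DD (fun _ : Fin k => b) x} ∪ Nᶜ)
      (fun k => isClosed_closure.union hN.isClosed_compl) (by
        rw [Set.eq_univ_iff_forall]
        intro x
        rw [Set.mem_iUnion]
        by_cases hx : x ∈ N
        · obtain ⟨k, hk⟩ := exists_not_DD ((hfin x hx).subset Set.sdiff_subset)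
          exact ⟨k, Or.inl (subset_closure hk)⟩
        · exact ⟨0, Or.inr hx⟩)
    obtain ⟨x, hxN, hx⟩ := hd.inter_open_nonempty N hN hNne
    obtain ⟨k, hk⟩ := Set.mem_iUnion.1 hx
    refine ⟨k, DD_spread _ (N ∩ interior (closure {x : A | ¬ DD (fun _ : Fin k => b) x} ∪ Nᶜ))
      (hN.inter isOpen_interior) ⟨x, hxN, hk⟩ ?_⟩
    rintro y ⟨hyN, hy⟩ hD
    have hy' : y ∈ closure {x : A | ¬ DD (fun _ : Fin k => b) x} := by
      rcases interior_subset hy with h | h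
      · exact h
      · exact absurd hyN h
    obtain ⟨z, hz1, hz2⟩ := mem_closure_iff_nhds.1 hy' _ (DD_open b y (hfin y hyN) hD)
    exact hz2 hz1
  classical
  obtain ⟨k, hk, x1, hx1⟩ : ∃ k, (∀ x, ¬ DD (fun _ : Fin (k+1) => b) x) ∧
      ∃ x, DD (fun _ : Fin k => b) x := by
    have hm := Nat.find_spec hbaire
    have hmin := fun j => Nat.find_min hbaire (m := j)
    cases hcase : Nat.find hbaire with
    | zero =>
      rw [hcase] at hm
      exact absurd ⟨fun i => i.elim0, fun i => i.elim0, fun i => i.elim0⟩ (hm 0)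
    | succ k =>
      rw [hcase] at hm
      have := hmin k (by omega)
      push Not at this
      exact ⟨k, hm, this⟩
  have hO : ∀ x, ¬ DD (fun o : Option (Fin k) => o.elim a (fun _ => b)) x := by
    refine DD_spread _ N hN hNne ?_
    rintro x hx ⟨μ, hinj, hμ⟩
    refine hk x ⟨fun i => μ (finSuccEquiv k i), hinj.comp (finSuccEquiv k).injective, fun i => ?_⟩
    change μ (finSuccEquiv k i) ∈ nzSpec (b * x)
    rcases finSuccEquiv k i with _ | j
    · exact hsub x hx (hμ none)
    · exact hμ (some j)
  have hA : ∀ x, ¬ DD (fun _ : Fin (k+1) => a) x := by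
    refine DD_spread _ N hN hNne ?_
    rintro x hx ⟨μ, hinj, hμ⟩
    exact hk x ⟨μ, hinj, fun i => hsub x hx (hμ i)⟩
  have hdense : Dense {x | DD (fun _ : Fin k => b) x} := by
    rw [dense_iff_inter_open]
    intro U hU hUne
    by_contra hcon
    rw [Set.not_nonempty_iff_eq_empty] at hcon
    refine DD_spread _ U hU hUne ?_ x1 hx1
    intro x hx hD
    have : x ∈ U ∩ {x | DD (fun _ : Fin k => b) x} := ⟨hx, hD⟩
    rw [hcon] at this
    exact this
  have hgood : ∀ x, DD (fun _ : Fin k => b) x → nzSpec (a * x) ⊆ nzSpec (b * x) := by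
    rintro x ⟨μ, hinj, hμ⟩ α hα
    by_cases hex : ∃ i, μ i = α
    · obtain ⟨i, rfl⟩ := hex
      exact hμ i
    · push Not at hex
      refine absurd ⟨fun o => o.elim α μ, ?_, ?_⟩ (hO x)
      · rintro (_ | i) (_ | j) hij
        · rfl
        · exact absurd hij.symm (hex j)
        · exact absurd hij (hex i)
        · exact congrArg some (hinj hij)
      · rintro (_ | i)
        · exact hα
        · exact hμ i
  intro x α hα
  refine ⟨?_, hα.2⟩
  intro hres
  have hα0 : α ≠ 0 := hα.2
  have hafin : (spectrum ℂ (a * x)).Finite := by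
    have := DD_of_encard (hA x)
    exact (this.insert 0).subset (fun z hz => by
      by_cases h : z = 0
      · exact Or.inl h
      · exact Or.inr ⟨hz, h⟩)
  have hcont : Continuous (fun p : A × ℂ => algebraMap ℂ A p.2 - b * p.1) :=
    ((continuous_algebraMap ℂ A).comp continuous_snd).sub (continuous_const.mul continuous_fst)
  have hopen : {p : A × ℂ | IsUnit (algebraMap ℂ A p.2 - b * p.1)} ∈ 𝓝 (x, α) :=
    (Units.isOpen.preimage hcont).mem_nhds hres
  obtain ⟨ε, hε, hball⟩ := Metric.mem_nhds_iff.1 hopen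
  have hc : Tendsto (fun y => a * y) (𝓝 x) (𝓝 (a * x)) := (continuous_const_mul a).tendsto x
  have hev := hc.eventually (persist (a * x) hafin α hα.1 (min ε ‖α‖)
    (lt_min hε (norm_pos_iff.2 hα0)))
  have hev2 := hev.and (Metric.ball_mem_nhds x hε)
  obtain ⟨y, ⟨⟨α', hα', hd⟩, hyb⟩, hyD⟩ := mem_closure_iff_nhds.1 (hdense x) _ hev2
  have hα'0 : α' ≠ 0 := by
    rintro rfl
    rw [zero_sub, norm_neg] at hd
    exact absurd (hd.trans_le (min_le_right _ _)) (lt_irrefl _)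
  have hb := hgood y hyD ⟨hα', hα'0⟩
  apply hb.1
  refine hball (?_ : (y, α') ∈ _)
  rw [Metric.mem_ball, Prod.dist_eq, max_lt_iff]
  exact ⟨hyb, by rw [dist_eq_norm]; exact hd.trans_le (min_le_left _ _)⟩
end
end

section
/- Let A be a complex semisimple unital Banach algebra, let N be a nonempty open subset of A, and let a, b ∈ A. If σ(bx) is finite for each x ∈ N and σ'(ax) ⊆ σ'(bx) for each x ∈ N, then a commutes with b and, either a = 0, or there exist rank one elements a₁, …, aₙ of A and an integer k ≤ n such that a = a₁ + ⋯ + a_k and b = a₁ + ⋯ + aₙ. Moreover a is orthogonal to b − a, i.e. a(b − a) = (b − a)a = 0. -/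
open Complex

noncomputable section

set_option linter.unusedSectionVars false

section QNbasic
variable {A : Type*} [NormedRing A] [NormedAlgebra ℂ A] [CompleteSpace A]

/-- quasinilpotent -/
def QN {A : Type*} [Ring A] [Algebra ℂ A] (x : A) : Prop := ∀ z ∈ spectrum ℂ x, z = 0

lemma qn_of_frequently {x : A}
    (h : ∀ ε : ℝ, 0 < ε → ∃ᶠ n : ℕ in Filter.atTop, ‖x ^ n‖ ≤ ε ^ n) : QN x := by
  intro z hz
  by_contra hz0
  have hzn : 0 < ‖z‖ := norm_pos_iff.2 hz0
  have h1 := h (‖z‖ / 2) (by positivity)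
  have h2 : ∀ᶠ n : ℕ in Filter.atTop, ‖(1:A)‖ < 2 ^ n :=
    (tendsto_pow_atTop_atTop_of_one_lt (by norm_num : (1:ℝ) < 2)).eventually_gt_atTop _
  obtain ⟨n, hn1, hn2⟩ := (h1.and_eventually h2).exists
  have hzpow : z ^ n ∈ spectrum ℂ (x ^ n) := spectrum.pow_mem_pow x n hz
  have h3 := spectrum.norm_le_norm_mul_of_mem hzpow
  rw [norm_pow] at h3
  have h4 : ‖z‖ ^ n ≤ (‖z‖/2)^n * ‖(1:A)‖ := h3.trans (by gcongr)
  rw [div_pow] at h4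
  have h5 : 0 < ‖z‖ ^ n := by positivity
  have h6 : (0:ℝ) < 2 ^ n := by positivity
  have : ‖z‖ ^ n * 2 ^ n ≤ ‖z‖^n * ‖(1:A)‖ := by
    calc _ ≤ (‖z‖ ^ n / 2 ^ n * ‖(1:A)‖) * 2 ^ n := by gcongr
      _ = _ := by field_simp
  have := le_of_mul_le_mul_left this h5
  linarith

lemma QN.eventually {x : A} (h : QN x) {ε : ℝ} (hε : 0 < ε) :
    ∀ᶠ n : ℕ in Filter.atTop, ‖x ^ n‖ ≤ ε ^ n := by
  have h0 : spectralRadius ℂ x = 0 := by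
    unfold spectralRadius
    simp only [ENNReal.iSup_eq_zero]
    intro z hz
    simp [h z hz]
  have h1 := spectrum.pow_norm_pow_one_div_tendsto_nhds_spectralRadius x
  rw [h0] at h1
  have h2 := h1.eventually_lt_const (show 0 < ENNReal.ofReal ε by simpa using hε)
  filter_upwards [h2, Filter.eventually_gt_atTop 0] with n hn hn0
  have h3 : ‖x ^ n‖ ^ (1 / n : ℝ) < ε := (ENNReal.ofReal_lt_ofReal_iff hε).1 hn
  have h4 : (‖x ^ n‖ ^ (1 / n : ℝ)) ^ n ≤ ε ^ n := by gcongr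
  rwa [← Real.rpow_natCast, ← Real.rpow_mul (norm_nonneg _), one_div,
    inv_mul_cancel₀ (by positivity), Real.rpow_one] at h4

lemma qn_max {g : ℂ → A} (hg : Differentiable ℂ g) {R : ℝ} (hR : 0 < R)
    (h : ∀ μ : ℂ, ‖μ‖ = R → QN (g μ)) : QN (g 0) := by
  apply qn_of_frequently
  intro ε hε
  have hcont : Continuous g := hg.continuous
  let U : ℕ → Set ℂ := fun k => {μ | ‖g μ ^ (2 ^ k)‖ < ε ^ (2 ^ k)}
  have hU : ∀ k, IsOpen (U k) := fun k => isOpen_lt (by fun_prop) (by fun_prop)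
  have hmono : Monotone U := by
    refine monotone_nat_of_le_succ fun k μ hμ => ?_
    simp only [U, Set.mem_ofPred_eq] at hμ ⊢
    rw [pow_succ 2 k, pow_mul, pow_mul, pow_two, pow_two]
    calc _ ≤ ‖g μ ^ 2 ^ k‖ * ‖g μ ^ 2 ^ k‖ := norm_mul_le _ _
      _ < _ := by gcongr
  have hcov : Metric.sphere (0:ℂ) R ⊆ ⋃ k, U k := by
    intro μ hμ
    have h1 := (h μ (by simpa using hμ)).eventually (show 0 < ε / 2 by positivity)
    have h2 := (tendsto_pow_atTop_atTop_of_one_lt (by norm_num : 1 < 2)).eventually h1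
    obtain ⟨k, hk⟩ := h2.exists
    refine Set.mem_iUnion.2 ⟨k, lt_of_le_of_lt hk ?_⟩
    exact pow_lt_pow_left₀ (by linarith) (by positivity) (by positivity)
  obtain ⟨k, hk⟩ := (isCompact_sphere (0:ℂ) R).elim_directed_cover U hU hcov
    (directed_of_isDirected_le hmono)
  have key : ∀ j, k ≤ j → ‖g 0 ^ (2 ^ j)‖ ≤ ε ^ (2 ^ j) := by
    intro j hj
    have hd : Differentiable ℂ (fun μ => g μ ^ (2 ^ j)) := hg.pow _
    refine Complex.norm_le_of_forall_mem_frontier_norm_le (U := Metric.ball (0:ℂ) R)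
      (f := fun μ => g μ ^ (2 ^ j)) Metric.isBounded_ball hd.diffContOnCl ?_
      (subset_closure (by simpa using hR))
    intro z hz
    rw [frontier_ball _ hR.ne'] at hz
    exact (hmono hj (hk hz)).le
  rw [Filter.frequently_atTop]
  intro n
  refine ⟨2 ^ (max k n), ?_, key _ (le_max_left _ _)⟩
  exact (le_max_right k n).trans Nat.lt_two_pow_self.le

lemma QN.mul {x y : A} (h : QN x) (hc : Commute x y) : QN (x * y) := by
  apply qn_of_frequently
  intro ε hε
  apply Filter.Eventually.frequently
  have h1 := h.eventually (show 0 < ε / (‖y‖ + 1) by positivity)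
  filter_upwards [h1, Filter.eventually_gt_atTop 0] with n hn hn0
  rw [hc.mul_pow]
  calc _ ≤ ‖x ^ n‖ * ‖y ^ n‖ := norm_mul_le _ _
    _ ≤ (ε / (‖y‖ + 1)) ^ n * (‖y‖ + 1) ^ n := by
        gcongr
        exact (norm_pow_le' _ hn0).trans (by gcongr; linarith)
    _ = _ := by rw [← mul_pow]; field_simp

lemma QN.isUnit {x : A} (h : QN x) {z : ℂ} (hz : z ≠ 0) : IsUnit (algebraMap ℂ A z - x) := by
  by_contra hn
  exact hz (h z (spectrum.mem_iff.2 hn))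

lemma QN.isUnit_one_sub {x : A} (h : QN x) : IsUnit (1 - x) := by
  simpa using h.isUnit one_ne_zero

lemma QN.add {x y : A} (hx : QN x) (hy : QN y) (hc : Commute x y) : QN (x + y) := by
  intro z hz
  by_contra hz0
  apply spectrum.mem_iff.1 hz
  obtain ⟨u, hu⟩ := hx.isUnit hz0
  have hcu : Commute (u : A) y := by
    rw [hu]; exact Commute.sub_left (Algebra.commutes z y) hc
  have hq : QN (y * (↑u⁻¹ : A)) := hy.mul hcu.units_inv_left.symm
  have h1 := hq.isUnit_one_sub
  have : algebraMap ℂ A z - (x + y) = (1 - y * (↑u⁻¹ : A)) * u := by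
    rw [sub_mul, mul_assoc, u.inv_mul, hu]; simp; abel
  rw [this]
  exact h1.mul u.isUnit

lemma QN.neg {x : A} (hx : QN x) : QN (-x) := by
  have := hx.mul (Commute.neg_one_right x)
  simpa using this

lemma QN.sub {x y : A} (hx : QN x) (hy : QN y) (hc : Commute x y) : QN (x - y) := by
  rw [sub_eq_add_neg]; exact hx.add hy.neg hc.neg_right

lemma QN.swap {x y : A} (h : QN (x * y)) : QN (y * x) := by
  intro z hz
  by_contra h0
  have : z ∈ spectrum ℂ (y * x) \ {0} := ⟨hz, h0⟩
  rw [spectrum.nonzero_mul_comm] at this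
  exact h0 (h z this.1)

lemma QN.idem_eq_zero {e : A} (h : QN e) (he : e * e = e) : e = 0 := by
  obtain ⟨u, hu⟩ := h.isUnit_one_sub
  have : (u : A) * e = 0 := by rw [hu, sub_mul, he]; simp
  simpa using this

lemma qn_of_pow {x : A} {n : ℕ} (h : QN (x ^ n)) : QN x := by
  intro z hz
  have := h _ (spectrum.pow_mem_pow x n hz)
  exact eq_zero_of_pow_eq_zero this

lemma qn_aeval {x : A} {p : Polynomial ℂ} (h : ∀ z ∈ spectrum ℂ x, p.eval z = 0) :
    QN (Polynomial.aeval x p) := by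
  intro z hz
  cases subsingleton_or_nontrivial A
  · exact absurd (isUnit_of_subsingleton _) (spectrum.mem_iff.1 hz)
  rw [spectrum.map_polynomial_aeval] at hz
  obtain ⟨w, hw, rfl⟩ := hz
  exact h w hw

lemma eq_zero_of_qn_mul (hss : TwoSidedIdeal.jacobson (⊥ : TwoSidedIdeal A) = ⊥) {v : A}
    (h : ∀ y, QN (v * y)) : v = 0 := by
  have h1 : v ∈ TwoSidedIdeal.jacobson (⊥ : TwoSidedIdeal A) := by
    rw [TwoSidedIdeal.mem_jacobson_iff]
    intro y
    obtain ⟨u, hu⟩ := (h y).swap.neg.isUnit_one_sub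
    refine ⟨(↑u⁻¹ : A), ?_⟩
    rw [TwoSidedIdeal.mem_bot]
    have : (↑u⁻¹ : A) * u = 1 := u.inv_mul
    rw [hu] at this
    rw [← this]; noncomm_ring
  rw [hss] at h1
  exact (TwoSidedIdeal.mem_bot A).1 h1

/-- Lemma S -/
lemma qn_of_finite_spec {u v : A} (F : Finset ℂ) {δ : ℝ} (hδ : 0 < δ)
    (h : ∀ l : ℂ, ‖l‖ ≤ δ → ∀ z ∈ spectrum ℂ (u + l • v), z ∈ F) : QN v := by
  let g : ℂ → A := fun μ => Polynomial.aeval (v + μ • u) (∏ f ∈ F, (Polynomial.X - Polynomial.C (μ * f)))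
  have hg : Differentiable ℂ g := by
    have : ∀ G : Finset ℂ, Differentiable ℂ (fun μ : ℂ =>
        Polynomial.aeval (v + μ • u) (∏ f ∈ G, (Polynomial.X - Polynomial.C (μ * f)))) := by
      intro G
      induction G using Finset.induction_on with
      | empty => simp
      | insert f G hf ih =>
        simp only [Finset.prod_insert hf, map_mul, map_sub, Polynomial.aeval_X, Polynomial.aeval_C]
        simp only [map_mul] at ih
        refine Differentiable.mul ?_ ih
        simp only [Algebra.algebraMap_eq_smul_one, smul_mul_smul_comm, one_mul]
        fun_prop
    exact this F
  have h1 := qn_max hg (R := δ⁻¹) (by positivity) (by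
    intro μ hμ
    have hμ0 : μ ≠ 0 := by rintro rfl; simp at hμ; exact hδ.ne' hμ.symm
    apply qn_aeval
    intro z hz
    rw [Polynomial.eval_prod]
    have h2 : v + μ • u = μ • (u + μ⁻¹ • v) := by
      rw [smul_add, smul_smul, mul_inv_cancel₀ hμ0, one_smul, add_comm]
    have h3 : μ⁻¹ * z ∈ spectrum ℂ (u + μ⁻¹ • v) := by
      rw [h2] at hz
      have := (spectrum.smul_mem_smul_iff (r := Units.mk0 μ hμ0) (s := μ⁻¹ * z)
        (a := u + μ⁻¹ • v)).1 (by
          simpa [Units.smul_def, hμ0] using hz)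
      exact this
    have h4 := h μ⁻¹ (by rw [norm_inv, hμ, inv_inv]) _ h3
    refine Finset.prod_eq_zero h4 ?_
    simp [hμ0])
  have h2 : g 0 = v ^ F.card := by
    simp [g]
  rw [h2] at h1
  exact qn_of_pow h1

end QNbasic

section Newb
open Filter Topology
variable {A : Type*} [NormedRing A] [NormedAlgebra ℂ A] [CompleteSpace A]

lemma newburgh {x : A} {l : ℂ} (hl : l ∈ spectrum ℂ x) {ρ : ℝ} (hρ : 0 < ρ)
    (hs : ∀ z ∈ spectrum ℂ x, dist z l ≠ ρ) :
    ∀ᶠ y in 𝓝 x, ∃ z ∈ spectrum ℂ y, dist z l < ρ := by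
  have hunit : ∀ μ ∈ Metric.sphere l ρ, IsUnit (algebraMap ℂ A μ - x) := by
    intro μ hμ
    by_contra hn
    exact hs μ (spectrum.mem_iff.2 hn) hμ
  have hcont : ∀ μ ∈ Metric.sphere l ρ,
      ContinuousAt (fun q : A × ℂ => Ring.inverse (algebraMap ℂ A q.2 - q.1)) (x, μ) := by
    intro μ hμ
    obtain ⟨u, hu⟩ := hunit μ hμ
    have h1 : ContinuousAt Ring.inverse ((fun q : A × ℂ => (algebraMap ℂ A q.2 - q.1)) (x, μ)) := by
      simp only [← hu]
      exact NormedRing.inverse_continuousAt u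
    have h2 : Continuous (fun q : A × ℂ => (algebraMap ℂ A q.2 - q.1)) :=
      ((algebraMapCLM ℂ A).continuous.comp continuous_snd).sub continuous_fst
    exact ContinuousAt.comp (f := fun q : A × ℂ => (algebraMap ℂ A q.2 - q.1)) h1 h2.continuousAt
  have hbd : ∃ C : ℝ, ∀ μ ∈ Metric.sphere l ρ, ‖Ring.inverse (algebraMap ℂ A μ - x)‖ ≤ C := by
    have : ContinuousOn (fun μ : ℂ => Ring.inverse (algebraMap ℂ A μ - x)) (Metric.sphere l ρ) := by
      intro μ hμ
      have := ContinuousAt.comp (f := fun μ : ℂ => (x, μ)) (x := μ) (hcont μ hμ) (by fun_prop)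
      exact this.continuousWithinAt
    exact (isCompact_sphere l ρ).exists_bound_of_continuousOn this
  obtain ⟨C, hC⟩ := hbd
  have hev : ∀ᶠ y in 𝓝 x, ∀ μ ∈ Metric.sphere l ρ, IsUnit (algebraMap ℂ A μ - y) ∧
      ‖Ring.inverse (algebraMap ℂ A μ - y)‖ < C + 1 := by
    refine (isCompact_sphere l ρ).eventually_forall_of_forall_eventually ?_
    intro μ hμ
    have h2 : Continuous (fun q : A × ℂ => (algebraMap ℂ A q.2 - q.1)) :=
      ((algebraMapCLM ℂ A).continuous.comp continuous_snd).sub continuous_fst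
    have e1 : ∀ᶠ q : A × ℂ in 𝓝 (x, μ), IsUnit (algebraMap ℂ A q.2 - q.1) :=
      h2.continuousAt.eventually (Units.isOpen.mem_nhds (hunit μ hμ))
    have e2 := (hcont μ hμ).norm.eventually_lt_const
      (show ‖Ring.inverse (algebraMap ℂ A μ - x)‖ < C + 1 by linarith [hC μ hμ])
    exact e1.and e2
  have hC1 : 0 < |C| + 1 := by positivity
  have hnear : ∀ᶠ y in 𝓝 x, ‖x - y‖ < (|C| + 1)⁻¹ := by
    have : ContinuousAt (fun y => ‖x - y‖) x := by fun_prop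
    exact this.eventually_lt_const (by simpa using hC1)
  filter_upwards [hev, hnear] with y hy hy2
  by_contra! hno
  have hres : ∀ z ∈ Metric.closedBall l ρ, z ∈ resolventSet ℂ y := by
    intro z hz
    rcases (Metric.mem_closedBall.1 hz).lt_or_eq with h | h
    · by_contra hn
      exact absurd (hno z hn) (not_le.2 h)
    · exact (hy z h).1
  have hdiff : DifferentiableOn ℂ (resolvent y) (Metric.closedBall l ρ) := fun z hz =>
    (spectrum.hasDerivAt_resolvent_const_left (hres z hz)).differentiableAt.differentiableWithinAt
  have hmax : ‖resolvent y l‖ ≤ C + 1 := by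
    refine Complex.norm_le_of_forall_mem_frontier_norm_le (U := Metric.ball l ρ)
      Metric.isBounded_ball ?_ ?_ (subset_closure (by simpa using hρ))
    · apply DifferentiableOn.diffContOnCl
      rwa [closure_ball _ hρ.ne']
    · intro z hz
      rw [frontier_ball _ hρ.ne'] at hz
      exact (hy z hz).2.le
  obtain ⟨u, hu⟩ := hres l (by simp [hρ.le])
  have hinv : resolvent y l = (↑u⁻¹ : A) := by
    rw [resolvent, ← hu, Ring.inverse_unit]
  rw [hinv] at hmax
  apply spectrum.mem_iff.1 hl
  have h3 : ‖(algebraMap ℂ A l - x) - u‖ < ‖(↑u⁻¹ : A)‖⁻¹ := by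
    rw [hu]
    have : algebraMap ℂ A l - x - (algebraMap ℂ A l - y) = -(x - y) := by abel
    rw [this, norm_neg]
    cases subsingleton_or_nontrivial A
    · exact absurd (isUnit_of_subsingleton _) (spectrum.mem_iff.1 hl)
    refine hy2.trans_le ?_
    have : 0 < ‖(↑u⁻¹ : A)‖ := norm_pos_iff.2 u⁻¹.ne_zero
    gcongr
    linarith [le_abs_self C]
  exact (Units.ofNearby u _ h3).isUnit

lemma newburgh_finite {x : A} (hfin : (spectrum ℂ x).Finite) {ρ : ℝ} (hρ : 0 < ρ) :
    ∀ᶠ y in 𝓝 x, ∀ l ∈ spectrum ℂ x, ∃ z ∈ spectrum ℂ y, dist z l < ρ := by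
  rw [Set.Finite.eventually_all hfin]
  intro l hl
  have hbad : ((fun z => dist z l) '' spectrum ℂ x).Finite := hfin.image _
  obtain ⟨r, hr1, hr2⟩ := (Set.Ioo_infinite hρ).exists_notMem_finite hbad
  filter_upwards [newburgh hl hr1.1 (fun z hz h => hr2 ⟨z, hz, h⟩)] with y hy
  obtain ⟨z, hz, hz2⟩ := hy
  exact ⟨z, hz, hz2.trans hr1.2⟩

lemma exists_sep {S : Set ℂ} (hS : S.Finite) :
    ∃ ρ : ℝ, 0 < ρ ∧ ∀ z ∈ S, ∀ w ∈ S, z ≠ w → 2 * ρ < dist z w := by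
  have h : ∀ᶠ ρ : ℝ in 𝓝[>] 0, ∀ z ∈ S, ∀ w ∈ S, z ≠ w → 2 * ρ < dist z w := by
    rw [Set.Finite.eventually_all hS]
    intro z hz
    rw [Set.Finite.eventually_all hS]
    intro w hw
    by_cases hzw : z = w
    · simp [hzw]
    · have : ContinuousAt (fun ρ : ℝ => 2 * ρ) 0 := by fun_prop
      have := this.eventually_lt_const (show 2 * (0:ℝ) < dist z w by simpa using hzw)
      filter_upwards [nhdsWithin_le_nhds this] with ρ hρ _ using hρ
  obtain ⟨ρ, h1, h2⟩ := (h.and self_mem_nhdsWithin).exists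
  exact ⟨ρ, h2, h1⟩

lemma count_le {x : A} (hfin : (spectrum ℂ x).Finite) :
    ∀ᶠ y in 𝓝 x, (spectrum ℂ x).encard ≤ (spectrum ℂ y).encard := by
  obtain ⟨ρ, hρ, hsep⟩ := exists_sep hfin
  filter_upwards [newburgh_finite hfin hρ] with y hy
  choose! g hg1 hg2 using hy
  refine Set.encard_le_encard_of_injOn (f := g) hg1 ?_
  intro z hz w hw h
  by_contra hne
  have h1 := hsep z hz w hw hne
  have h2 := dist_triangle_left z w (g z)
  have h3 := hg2 z hz
  have h4 := hg2 w hw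
  rw [← h] at h4
  linarith

lemma exists_good (b : A) {N : Set A} (hN : IsOpen N) (hNne : N.Nonempty)
    (hfin : ∀ x ∈ N, (spectrum ℂ (b * x)).Finite) :
    ∃ N' ⊆ N, IsOpen N' ∧ ∃ x0 ∈ N', ∃ L : Finset ℂ, (L : Set ℂ) = nzSpec (b * x0) ∧
      ∀ x ∈ N', (nzSpec (b * x)).encard ≤ L.card := by
  let F : ℕ → Set A := fun n => {x | x ∈ N ∧ (spectrum ℂ (b * x)).encard ≤ n}
  let f : ℕ → Set A := fun n => Nat.casesOn n Nᶜ (fun k => closure (F k))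
  have hclosed : ∀ i, IsClosed (f i) := by
    rintro (_ | k)
    · exact hN.isClosed_compl
    · exact isClosed_closure
  have hU : ⋃ i, f i = Set.univ := by
    rw [Set.eq_univ_iff_forall]
    intro x
    by_cases hx : x ∈ N
    · refine Set.mem_iUnion.2 ⟨(spectrum ℂ (b * x)).ncard + 1, subset_closure ⟨hx, ?_⟩⟩
      rw [(hfin x hx).cast_ncard_eq]
    · exact Set.mem_iUnion.2 ⟨0, hx⟩
  have hd := dense_iUnion_interior_of_closed hclosed hU
  obtain ⟨x, hx, hxN⟩ := hd.exists_mem_open hN hNne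
  obtain ⟨i, hi⟩ := Set.mem_iUnion.1 hx
  rcases i with _ | n
  · exact absurd hxN (interior_subset hi)
  let W := N ∩ interior (closure (F n))
  have hW : IsOpen W := hN.inter isOpen_interior
  have hWn : ∀ y ∈ W, (spectrum ℂ (b * y)).encard ≤ n := by
    intro y hy
    have h1 : ∀ᶠ y' in 𝓝 y, (spectrum ℂ (b * y)).encard ≤ (spectrum ℂ (b * y')).encard := by
      have hc : ContinuousAt (fun y' => b * y') y := by fun_prop
      exact hc.eventually (count_le (hfin y hy.1))
    have h2 : ∃ᶠ y' in 𝓝 y, y' ∈ F n := mem_closure_iff_frequently.1 (interior_subset hy.2)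
    obtain ⟨y', h3, h4⟩ := (h2.and_eventually h1).exists
    exact h4.trans h3.2
  have hWne : W.Nonempty := ⟨x, hxN, hi⟩
  have hfinW : ∀ y ∈ W, (nzSpec (b * y)).Finite := fun y hy => (hfin y hy.1).subset Set.sdiff_subset
  -- maximal
  have hbdd : ∀ y ∈ W, (nzSpec (b * y)).ncard ≤ n := by
    intro y hy
    have : (nzSpec (b * y)).encard ≤ n :=
      (Set.encard_le_encard (Set.sdiff_subset : nzSpec (b * y) ⊆ _)).trans (hWn y hy)
    rw [← (hfinW y hy).cast_ncard_eq] at this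
    exact_mod_cast this
  have hbd2 : BddAbove ((fun y => (nzSpec (b * y)).ncard) '' W) := by
    refine ⟨n, ?_⟩
    rintro _ ⟨y, hy, rfl⟩
    exact hbdd y hy
  obtain ⟨x0, hx0, hx0e⟩ := Nat.sSup_mem (hWne.image (fun y => (nzSpec (b * y)).ncard)) hbd2
  refine ⟨W, Set.inter_subset_left, hW, x0, hx0, (hfinW x0 hx0).toFinset, by simp, ?_⟩
  intro y hy
  rw [← (hfinW y hy).cast_ncard_eq]
  have := le_csSup hbd2 ⟨y, hy, rfl⟩
  rw [← hx0e] at this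
  rw [← Set.ncard_eq_toFinset_card _ (hfinW x0 hx0)]
  exact_mod_cast this

lemma local_structure (b : A) {N' : Set A} (hN : IsOpen N') {x0 : A} (hx0 : x0 ∈ N')
    (L : Finset ℂ) (hL : (L : Set ℂ) = nzSpec (b * x0))
    (hmax : ∀ x ∈ N', (nzSpec (b * x)).encard ≤ L.card) :
    ∃ ρ : ℝ, 0 < ρ ∧ (∀ z ∈ insert 0 L, ∀ w ∈ insert 0 L, z ≠ w → 2 * ρ < dist z w) ∧
      ∀ᶠ x in 𝓝 x0, ∃ g : ℂ → ℂ, (∀ l ∈ L, dist (g l) l < ρ) ∧ nzSpec (b * x) = g '' L := by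
  have hfin : (spectrum ℂ (b * x0)).Finite := by
    refine ((insert 0 L : Finset ℂ).finite_toSet).subset ?_
    intro z hz
    by_cases h : z = 0
    · simp [h]
    · have : z ∈ (L : Set ℂ) := by rw [hL]; exact ⟨hz, h⟩
      simp at this; simp [this]
  obtain ⟨ρ, hρ, hsep⟩ := exists_sep (insert 0 L : Finset ℂ).finite_toSet
  refine ⟨ρ, hρ, fun z hz w hw => hsep z (by simpa using hz) w (by simpa using hw), ?_⟩
  have hc : ContinuousAt (fun y' => b * y') x0 := by fun_prop
  filter_upwards [hc.eventually (newburgh_finite hfin hρ), hN.mem_nhds hx0] with x hx hxN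
  have hL2 : ∀ l ∈ L, l ∈ spectrum ℂ (b * x0) ∧ l ≠ 0 := by
    intro l hl
    have : l ∈ (L : Set ℂ) := hl
    rw [hL] at this
    exact this
  choose! g hg1 hg2 using hx
  refine ⟨g, fun l hl => hg2 l (hL2 l hl).1, ?_⟩
  have hinj : Set.InjOn g L := by
    intro z hz w hw h
    by_contra hne
    have h1 := hsep z (by simp_all) w (by simp_all) hne
    have h2 := dist_triangle_left z w (g z)
    have h3 := hg2 z (hL2 z hz).1
    have h4 := hg2 w (hL2 w hw).1
    rw [← h] at h4
    linarith
  have hsubs : g '' L ⊆ nzSpec (b * x) := by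
    rintro _ ⟨l, hl, rfl⟩
    refine ⟨hg1 l (hL2 l hl).1, ?_⟩
    intro h0
    have h0' : g l = 0 := h0
    have h1 := hsep l (by simp_all) 0 (by simp) (hL2 l hl).2
    have h3 := hg2 l (hL2 l hl).1
    rw [h0', dist_comm] at h3
    linarith
  symm
  refine Set.Finite.eq_of_subset_of_encard_le ?_ hsubs ?_
  · exact L.finite_toSet.image g
  · rw [hinj.encard_image, Set.encard_coe_eq_coe_finsetCard]
    exact hmax x hxN

end Newb

section Idem
open Filter Topology
variable {A : Type*} [NormedRing A] [NormedAlgebra ℂ A] [CompleteSpace A]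

lemma exists_coeffs : ∃ c : ℕ → ℂ, (∀ k, ‖c k‖ ≤ 1) ∧ c 0 = 1 ∧
    ∀ k, ∑ p ∈ Finset.HasAntidiagonal.antidiagonal k, c p.1 * c p.2 = (-1) ^ k := by
  let r : ℚ := -1/2
  refine ⟨fun k => ((Ring.choose r k : ℚ) : ℂ), ?_, ?_, ?_⟩
  · have hq : ∀ k, |Ring.choose r k| ≤ 1 := by
      intro k
      induction k with
      | zero => simp
      | succ k ih =>
        have h1 := Ring.descPochhammer_eq_factorial_smul_choose r (k+1)
        have h2 := Ring.descPochhammer_eq_factorial_smul_choose r k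
        rw [descPochhammer_succ_right, Polynomial.smeval_mul, h2] at h1
        simp only [Polynomial.smeval_sub, Polynomial.smeval_X, Polynomial.smeval_natCast,
          nsmul_eq_mul, Nat.factorial_succ] at h1
        have h3 : (k.factorial : ℚ) ≠ 0 := by positivity
        have h4 : Ring.choose r k * (r - k) = (k + 1) * Ring.choose r (k+1) := by
          have : (k.factorial : ℚ) * (Ring.choose r k * (r - k)) =
            (k.factorial : ℚ) * ((k + 1) * Ring.choose r (k+1)) := by
            push_cast at h1
            simp only [pow_zero, pow_one, mul_one, nsmul_eq_mul, smul_eq_mul] at h1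
            linarith
          exact mul_left_cancel₀ h3 this
        have h5 : Ring.choose r (k+1) = Ring.choose r k * ((r - k) / (k+1)) := by
          have : (k + 1 : ℚ) ≠ 0 := by positivity
          field_simp
          linarith
        rw [h5, abs_mul]
        have h6 : |(r - k) / (k+1)| ≤ 1 := by
          rw [abs_div, abs_of_pos (show (0:ℚ) < k + 1 by positivity), div_le_one (by positivity),
            abs_le]
          have : (0:ℚ) ≤ k := by positivity
          constructor <;> simp only [r] <;> linarith
        calc _ ≤ (1:ℚ) * 1 := by gcongr
          _ = 1 := by norm_num
    intro k
    have := hq k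
    beta_reduce
    rw [show ((Ring.choose r k : ℚ) : ℂ) = (((Ring.choose r k : ℚ) : ℝ) : ℂ) by push_cast; rfl,
      Complex.norm_real, Real.norm_eq_abs]
    exact_mod_cast this
  · simp
  · intro k
    have h1 : PowerSeries.binomialSeries ℚ r * PowerSeries.binomialSeries ℚ r =
        PowerSeries.binomialSeries ℚ (-1 : ℚ) := by
      rw [← PowerSeries.binomialSeries_add]; norm_num [r]
    have h2 : PowerSeries.binomialSeries ℚ (-1 : ℚ) * (1 + PowerSeries.X) = 1 := by
      have h := PowerSeries.binomialSeries_nat (R := ℚ) (A := ℚ) 1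
      rw [pow_one] at h
      rw [← h, ← PowerSeries.binomialSeries_add]
      norm_num
    have h3 : ∀ k, PowerSeries.coeff k (PowerSeries.binomialSeries ℚ (-1 : ℚ)) = (-1) ^ k := by
      intro k
      induction k with
      | zero => simp
      | succ k ih =>
        have := congrArg (PowerSeries.coeff (k+1)) h2
        rw [mul_add, mul_one, map_add, PowerSeries.coeff_succ_mul_X, ih] at this
        simp [PowerSeries.coeff_one] at this
        simp
        rw [pow_succ]; linarith
    have h4 := h3 k
    rw [← h1, PowerSeries.coeff_mul] at h4
    simp only [PowerSeries.binomialSeries_coeff, smul_eq_mul, mul_one] at h4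
    beta_reduce
    exact_mod_cast congrArg (fun q : ℚ => (q : ℂ)) h4

lemma qn_summable {t : A} (ht : QN t) {c : ℕ → ℂ} (hc : ∀ k, ‖c k‖ ≤ 1) :
    Summable fun k => ‖c k • t ^ k‖ := by
  have h1 := ht.eventually (show (0:ℝ) < 1/2 by norm_num)
  refine Summable.of_norm_bounded_eventually_nat (g := fun k : ℕ => (1/2 : ℝ)^k)
    (summable_geometric_of_lt_one (by norm_num) (by norm_num)) ?_
  filter_upwards [h1] with n hn
  rw [norm_norm, norm_smul]
  calc _ ≤ 1 * (1/2 : ℝ)^n := by gcongr; exact hc n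
    _ = _ := one_mul _

lemma exists_inv_sqrt {t : A} (ht : QN t) : ∃ S r : A, S * S * (1 + t) = 1 ∧ S = 1 + t * r ∧
    ∀ y, Commute y t → Commute y r := by
  obtain ⟨c, hc1, hc0, hc⟩ := exists_coeffs
  have hs := qn_summable ht hc1
  have hs' := qn_summable ht (c := fun k => c (k+1)) (fun k => hc1 (k+1))
  refine ⟨∑' k, c k • t ^ k, ∑' k, c (k+1) • t ^ k, ?_, ?_, ?_⟩
  · rw [tsum_mul_tsum_eq_tsum_sum_antidiagonal_of_summable_norm hs hs]
    have h1 : ∀ n, ∑ kl ∈ Finset.HasAntidiagonal.antidiagonal n, c kl.1 • t ^ kl.1 * c kl.2 • t ^ kl.2 = (-t) ^ n := by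
      intro n
      have : ∀ kl ∈ Finset.HasAntidiagonal.antidiagonal n, c kl.1 • t ^ kl.1 * c kl.2 • t ^ kl.2
          = (c kl.1 * c kl.2) • t ^ n := by
        intro kl hkl
        rw [smul_mul_smul_comm, ← pow_add, Finset.HasAntidiagonal.mem_antidiagonal.1 hkl]
      rw [Finset.sum_congr rfl this, ← Finset.sum_smul, hc n, neg_pow t, Algebra.smul_def]
      simp
    simp_rw [h1]
    have hs2 : Summable (fun n => (-t) ^ n) := by
      have := qn_summable ht.neg (c := fun _ => 1) (by simp)
      simpa using this.of_norm
    have := hs2.tsum_pow_mul_one_sub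
    simpa using this
  · rw [hs.of_norm.tsum_eq_zero_add, hc0]
    simp only [pow_zero, one_smul]
    congr 1
    rw [← hs'.of_norm.tsum_mul_left]
    congr 1; ext k
    rw [mul_smul_comm, pow_succ']
  · intro y hy
    have h1 : HasSum (fun k => c (k+1) • t ^ k) (∑' k, c (k+1) • t ^ k) := hs'.of_norm.hasSum
    have h2 := h1.mul_left y
    have h3 := h1.mul_right y
    refine h2.unique ?_
    convert h3 using 2 with k
    rw [mul_smul_comm, smul_mul_assoc, (hy.pow_right k).eq]

lemma exists_idem_lift {h : A} (hn : QN (h * h - h)) : ∃ e r : A, e * e = e ∧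
    e = h + (h * h - h) * r ∧ ∀ y, Commute y h → Commute y r := by
  set n := h * h - h with hndef
  have hq : QN ((4:ℂ) • n) := by
    have := hn.mul (y := algebraMap ℂ A 4) (Algebra.commutes _ _).symm
    rwa [← Algebra.commutes, ← Algebra.smul_def] at this
  obtain ⟨S, r, h1, h2, h3⟩ := exists_inv_sqrt hq
  have hcn : ∀ y, Commute y h → Commute y n := fun y hy => (hy.mul_right hy).sub_right hy
  have hcr : ∀ y, Commute y h → Commute y r := fun y hy => h3 y ((hcn y hy).smul_right _)
  have hhS : Commute h S := by
    rw [h2]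
    exact (Commute.one_right h).add_right (((hcn h rfl).smul_right _).mul_right (hcr h rfl))
  set V := (1 - (2:ℂ) • h) * S with hV
  have hVV : V * V = 1 := by
    have hc1 : Commute (1 - (2:ℂ) • h) S := (Commute.one_left S).sub_left (hhS.smul_left _)
    have : V * V = (S * S) * ((1 - (2:ℂ) • h) * (1 - (2:ℂ) • h)) := by
      rw [hV, mul_assoc, ← mul_assoc S, ← hc1.eq, ← mul_assoc, ← mul_assoc, mul_assoc _ S S]
      exact ((hc1.mul_right hc1).mul_left (hc1.mul_right hc1)).eq
    rw [this]
    refine Eq.trans ?_ h1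
    congr 1
    rw [hndef]
    simp only [sub_mul, mul_sub, one_mul, mul_one, smul_mul_smul_comm, smul_sub]
    norm_num
    module
  refine ⟨(1/2 : ℂ) • (1 - V), (-2 : ℂ) • ((1 - (2:ℂ) • h) * r), ?_, ?_, ?_⟩
  · rw [smul_mul_smul_comm]
    simp only [sub_mul, mul_sub, one_mul, mul_one, hVV]
    module
  · have hcn' : Commute n (1 - (2:ℂ) • h) :=
      (Commute.one_right n).sub_right (((hcn h rfl).symm).smul_right _)
    rw [hV, h2, mul_add, mul_one, mul_smul_comm, ← mul_assoc n, hcn'.eq, smul_mul_assoc,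
      mul_smul_comm, mul_assoc]
    module
  · intro y hy
    exact (((Commute.one_right y).sub_right (hy.smul_right _)).mul_right (hcr y hy)).smul_right _

end Idem

section Top
set_option maxSynthPendingDepth 5
open Filter Topology
variable {A : Type*} [NormedRing A] [NormedAlgebra ℂ A] [CompleteSpace A]

/-- the space of bounded bilinear forms -/
abbrev BF (A : Type*) [NormedRing A] [NormedAlgebra ℂ A] := A →L[ℂ] A →L[ℂ] ℂ

def T1 (A : Type*) [NormedRing A] [NormedAlgebra ℂ A] : A →L[ℂ] (BF A →L[ℂ] BF A) :=
  ((ContinuousLinearMap.compL ℂ A A (A →L[ℂ] ℂ)).flip).comp (ContinuousLinearMap.mul ℂ A)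

def T2 (A : Type*) [NormedRing A] [NormedAlgebra ℂ A] : A →L[ℂ] (BF A →L[ℂ] BF A) :=
  (ContinuousLinearMap.compL ℂ A (A →L[ℂ] ℂ) (A →L[ℂ] ℂ)).comp
    (((ContinuousLinearMap.compL ℂ A A ℂ).flip).comp (ContinuousLinearMap.mul ℂ A))

lemma T1_apply (x : A) (φ : BF A) (s t : A) : T1 A x φ s t = φ (x * s) t := rfl
lemma T2_apply (x : A) (φ : BF A) (s t : A) : T2 A x φ s t = φ s (x * t) := rfl

lemma T1_one : T1 A 1 = 1 := by
  ext φ s t; simp [T1_apply]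
lemma T2_one : T2 A 1 = 1 := by
  ext φ s t; simp [T2_apply]
lemma T1_mul (x y : A) : T1 A (x * y) = T1 A y * T1 A x := by
  ext φ s t; simp [T1_apply, mul_assoc]
lemma T2_mul (x y : A) : T2 A (x * y) = T2 A y * T2 A x := by
  ext φ s t; simp [T2_apply, mul_assoc]
lemma T12_comm (x y : A) : Commute (T1 A x) (T2 A y) := by
  ext φ s t; simp [T1_apply, T2_apply]

lemma qn_of_anti {B : Type*} [NormedRing B] [NormedAlgebra ℂ B] (T : A →L[ℂ] B) (h1 : T 1 = 1)
    (hm : ∀ x y, T (x * y) = T y * T x) {x : A} (hx : QN x) : QN (T x) := by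
  intro z hz
  by_contra h0
  apply spectrum.mem_iff.1 hz
  obtain ⟨u, hu⟩ := hx.isUnit h0
  have h2 : algebraMap ℂ B z - T x = T u := by
    rw [hu, map_sub, Algebra.algebraMap_eq_smul_one, Algebra.algebraMap_eq_smul_one, map_smul, h1]
  rw [h2]
  exact ⟨⟨T u, T (↑u⁻¹ : A), by rw [← hm, u.inv_mul, h1], by rw [← hm, u.mul_inv, h1]⟩, rfl⟩

/-- the operator detecting two different nonzero spectral values -/
def TT (w : A) : BF A →L[ℂ] BF A := T1 A w * T2 A w * (T1 A w - T2 A w)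

lemma qn_TT_aux {B : Type*} [NormedRing B] [NormedAlgebra ℂ B] [CompleteSpace B]
    (T S : A →L[ℂ] B) (hT1 : T 1 = 1) (hS1 : S 1 = 1)
    (hT : ∀ x y, T (x * y) = T y * T x) (hS : ∀ x y, S (x * y) = S y * S x)
    (hc : ∀ x y, Commute (T x) (S y))
    {w : A} {γ : ℂ} (hw : ∀ z ∈ spectrum ℂ w, z = 0 ∨ z = γ) : QN (T w * S w * (T w - S w)) := by
  have hk : QN (w * w - γ • w) := by
    have := qn_aeval (x := w) (p := Polynomial.X * Polynomial.X - Polynomial.C γ * Polynomial.X) (by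
      intro z hz
      rcases hw z hz with rfl | rfl <;> simp)
    simpa [Algebra.smul_def] using this
  have h1 := qn_of_anti T hT1 hT hk
  have h2 := qn_of_anti S hS1 hS hk
  have q1 := h1.mul (hc (w * w - γ • w) w)
  have q2 := h2.mul (hc w (w * w - γ • w)).symm
  have cc : Commute w (w * w - γ • w) :=
    ((Commute.refl w).mul_right (Commute.refl w)).sub_right ((Commute.refl w).smul_right γ)
  have d1 : Commute (T (w * w - γ • w)) (T w) := by
    unfold Commute SemiconjBy; rw [← hT, ← hT, cc.eq]
  have d2 : Commute (S (w * w - γ • w)) (S w) := by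
    unfold Commute SemiconjBy; rw [← hS, ← hS, cc.eq]
  have q3 := q1.sub q2 (by
    refine Commute.mul_left ?_ ?_
    · exact (hc _ _).mul_right d1
    · exact d2.symm.mul_right (hc _ _).symm)
  have e : T w * S w * (T w - S w) = T (w * w - γ • w) * S w - S (w * w - γ • w) * T w := by
    have h := (hc w w).eq
    rw [map_sub, map_sub, hT, hS, map_smul, map_smul]
    have h3 : T w * S w * T w = T w * T w * S w := by rw [mul_assoc, ← h, mul_assoc]
    have h4 : T w * S w * S w = S w * S w * T w := by rw [h, mul_assoc, h, mul_assoc]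
    rw [mul_sub, h3, h4, sub_mul, sub_mul, smul_mul_assoc, smul_mul_assoc, h]
    abel
  rw [e]; exact q3

lemma qn_TT {w : A} {γ : ℂ} (hw : ∀ z ∈ spectrum ℂ w, z = 0 ∨ z = γ) : QN (TT w) :=
  qn_TT_aux (T1 A) (T2 A) T1_one T2_one T1_mul T2_mul T12_comm hw

lemma TT_eig {w : A} (hq : QN (TT w)) {α β : ℂ} {f g : A →L[ℂ] ℂ} (hf0 : f ≠ 0) (hg0 : g ≠ 0)
    (hf : ∀ s, f (w * s) = α * f s) (hg : ∀ s, g (w * s) = β * g s) : α * β * (α - β) = 0 := by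
  by_contra hne
  have hu := hq.isUnit hne
  let φ : BF A := f.smulRight g
  have h1 : (algebraMap ℂ (BF A →L[ℂ] BF A) (α * β * (α - β)) - TT w) φ = 0 := by
    ext s t
    simp [TT, T1_apply, T2_apply, φ, hf, hg, Algebra.algebraMap_eq_smul_one]
    ring
  obtain ⟨u, hu⟩ := hu
  rw [← hu] at h1
  have h2 : φ = 0 := by
    calc φ = (1 : BF A →L[ℂ] BF A) φ := rfl
      _ = ((↑u⁻¹ : BF A →L[ℂ] BF A) * u) φ := by rw [u.inv_mul]
      _ = (↑u⁻¹ : BF A →L[ℂ] BF A) ((u : BF A →L[ℂ] BF A) φ) := rfl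
      _ = 0 := by rw [h1, map_zero]
  obtain ⟨s, hs⟩ : ∃ s, f s ≠ 0 := by
    by_contra! h; exact hf0 (by ext s; simp [h])
  obtain ⟨t, ht⟩ : ∃ t, g t ≠ 0 := by
    by_contra! h; exact hg0 (by ext s; simp [h])
  have h3 : φ s t = 0 := by rw [h2]; rfl
  simp [φ] at h3
  rcases h3 with h | h
  · exact hs h
  · exact ht h

lemma exists_functional_s13 {w : A} {α : ℂ} (hα : α ∈ frontier (spectrum ℂ w)) :
    ∃ f : A →L[ℂ] ℂ, f ≠ 0 ∧ ∀ s, f (w * s) = α * f s := by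
  have hmem : α ∈ spectrum ℂ w := (spectrum.isClosed w).frontier_subset hα
  have hcl : α ∈ closure (spectrum ℂ w)ᶜ := by
    rw [frontier_eq_closure_inter_closure] at hα; exact hα.2
  let d := w - algebraMap ℂ A α
  let M : Submodule ℂ A := (LinearMap.range (LinearMap.mulLeft ℂ d)).topologicalClosure
  have hd : ¬ IsUnit d := by
    have := spectrum.mem_iff.1 hmem
    rwa [← IsUnit.neg_iff, neg_sub] at this
  have hnr : ∀ s, d * s ≠ 1 := by
    intro s hs
    apply hd
    -- nearby units
    have hcont : Continuous (fun z : ℂ => (w - algebraMap ℂ A z) * s) := by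
      have := (algebraMapCLM ℂ A).continuous
      exact (continuous_const.sub this).mul continuous_const
    have hev : ∀ᶠ z in 𝓝 α, IsUnit ((w - algebraMap ℂ A z) * s) :=
      hcont.continuousAt.eventually (Units.isOpen.mem_nhds (by
        change IsUnit (d * s); rw [hs]; exact isUnit_one))
    obtain ⟨z, hz1, hz2⟩ := ((mem_closure_iff_frequently.1 hcl).and_eventually hev).exists
    have hzu : IsUnit (w - algebraMap ℂ A z) := by
      have : IsUnit (algebraMap ℂ A z - w) := by
        by_contra h; exact hz1 (spectrum.mem_iff.2 h)
      rwa [← IsUnit.neg_iff, neg_sub] at this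
    obtain ⟨u, hu⟩ := hzu
    have hsu : IsUnit s := by
      rw [← hu] at hz2
      exact (Units.isUnit_units_mul u s).1 hz2
    obtain ⟨v, rfl⟩ := hsu
    have : d = (↑v⁻¹ : A) := by
      calc d = d * v * (↑v⁻¹ : A) := by rw [mul_assoc, v.mul_inv, mul_one]
        _ = _ := by rw [hs, one_mul]
    rw [this]; exact v⁻¹.isUnit
  have h1M : (1 : A) ∉ M := by
    intro h
    have h' : (1 : A) ∈ closure (LinearMap.range (LinearMap.mulLeft ℂ d) : Set A) := h
    obtain ⟨y, hy1, hy2⟩ := mem_closure_iff.1 h' {y | IsUnit y} Units.isOpen isUnit_one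
    obtain ⟨s, rfl⟩ := hy2
    obtain ⟨u, hu⟩ := hy1
    refine hnr (s * (↑u⁻¹ : A)) ?_
    have hu' : (u : A) = d * s := hu
    rw [← mul_assoc, ← hu', u.mul_inv]
  have hMc : IsClosed (M : Set A) := Submodule.isClosed_topologicalClosure _
  have : IsClosed (M : Set A) := hMc
  have h1Q : (M.mkQ 1 : A ⧸ M) ≠ 0 := by
    intro h
    exact h1M ((Submodule.Quotient.mk_eq_zero M).1 h)
  have : T3Space (A ⧸ M) := by infer_instance
  let _ : NormedAddCommGroup (A ⧸ M) := Submodule.Quotient.normedAddCommGroup M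
  obtain ⟨g, hg⟩ := SeparatingDual.exists_ne_zero (R := ℂ) h1Q
  refine ⟨g.comp M.mkQL, ?_, ?_⟩
  · intro h
    apply hg
    exact congrArg (fun f : A →L[ℂ] ℂ => f 1) h
  · intro s
    have h2 : M.mkQL (d * s) = 0 := by
      refine (Submodule.Quotient.mk_eq_zero M).2 ?_
      exact Submodule.le_topologicalClosure _ ⟨s, rfl⟩
    have h3 : (g.comp M.mkQL) (d * s) = 0 := by
      rw [ContinuousLinearMap.comp_apply, h2, map_zero]
    have h4 : d * s = w * s - α • s := by
      simp [d, sub_mul, Algebra.smul_def]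
    rw [h4, map_sub, map_smul, sub_eq_zero, smul_eq_mul] at h3
    exact h3

lemma subset_of_frontier {K F : Set ℂ} (hK : IsCompact K) (hF : F.Finite) (h : frontier K ⊆ F) :
    K ⊆ F := by
  intro z hz
  by_contra hzF
  have hc : IsConnected Fᶜ := hF.countable.isConnected_compl_of_one_lt_rank (by simp)
  have hsub : Fᶜ ⊆ K := by
    by_contra hns
    obtain ⟨y, hy, hyK⟩ := Set.not_subset.1 hns
    obtain ⟨p, hp1, hp2, hp3⟩ := hc.isPreconnected (interior K) Kᶜ isOpen_interior
      hK.isClosed.isOpen_compl (by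
        intro p hp
        by_cases hpK : p ∈ K
        · left
          by_contra hpi
          exact hp (h ⟨subset_closure hpK, hpi⟩)
        · exact Or.inr hpK) ⟨z, hzF, by
          by_contra hpi
          exact hzF (h ⟨subset_closure hz, hpi⟩)⟩ ⟨y, hy, hyK⟩
    exact hp3 (interior_subset hp2)
  have : (Set.univ : Set ℂ) ⊆ K ∪ F := by
    intro y _
    by_cases hy : y ∈ F
    · exact Or.inr hy
    · exact Or.inl (hsub hy)
  have hb : Bornology.IsBounded (Set.univ : Set ℂ) := (hK.isBounded.union hF.isBounded).subset this
  exact NormedSpace.unbounded_univ ℂ ℂ hb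

end Top

section Corner
open Filter Topology
variable {A : Type*} [NormedRing A] [NormedAlgebra ℂ A] [CompleteSpace A]

lemma QN.smul {x : A} (h : QN x) (c : ℂ) : QN (c • x) := by
  have := h.mul (y := algebraMap ℂ A c) (Algebra.commutes c x).symm
  rwa [← Algebra.commutes, ← Algebra.smul_def] at this

lemma QN.of_smul {x : A} {c : ℂ} (hc : c ≠ 0) (h : QN (c • x)) : QN x := by
  have := h.smul c⁻¹
  rwa [smul_smul, inv_mul_cancel₀ hc, one_smul] at this

lemma isUnit_corner {p X : A} {z : ℂ} (hp : p * p = p) (hX : IsUnit X) (hc : Commute X p)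
    (hz : z ≠ 0) : IsUnit (X * p + z • (1 - p)) := by
  obtain ⟨u, rfl⟩ := hX
  have hc' : Commute (↑u⁻¹ : A) p := hc.units_inv_left
  have e1 : p * (1 - p) = 0 := by rw [mul_sub, hp, mul_one, sub_self]
  have e2 : (1 - p) * p = 0 := by rw [sub_mul, hp, one_mul, sub_self]
  have e3 : (1 - p) * (1 - p) = 1 - p := by rw [mul_sub, e2, mul_one, sub_zero]
  have key : ∀ (x y : A) (s t : ℂ), Commute y p → x * y = 1 → s * t = 1 →
      (x * p + s • (1 - p)) * (y * p + t • (1 - p)) = 1 := by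
    intro x y s t hy hxy hst
    have f1 : x * p * (y * p) = p := by
      rw [mul_assoc, ← mul_assoc p, ← hy.eq, mul_assoc y, hp, ← mul_assoc, hxy, one_mul]
    have f2 : x * p * (1 - p) = 0 := by rw [mul_assoc, e1, mul_zero]
    have f3 : (1 - p) * (y * p) = 0 := by rw [hy.eq, ← mul_assoc, e2, zero_mul]
    rw [add_mul, mul_add, mul_add, f1, mul_smul_comm, f2, smul_mul_assoc, f3, smul_mul_smul_comm,
      e3, hst]
    simp
  exact ⟨⟨_, _, key u (↑u⁻¹ : A) z z⁻¹ hc' u.mul_inv (mul_inv_cancel₀ hz),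
    key (↑u⁻¹ : A) u z⁻¹ z hc u.inv_mul (inv_mul_cancel₀ hz)⟩, rfl⟩

lemma corner_qn {p : A} (hp : p * p = p)
    (H : ∀ w, p * w = w → w * p = w → ∃ β, ∀ z ∈ spectrum ℂ w, z = 0 ∨ z = β)
    {w : A} (h1 : p * w = w) (h2 : w * p = w) : ∃ c : ℂ, QN (w - c • p) := by
  obtain ⟨β, hβ⟩ := H w h1 h2
  obtain ⟨t, ht0, htβ⟩ : ∃ t : ℂ, t ≠ 0 ∧ t ≠ -β := by
    obtain ⟨t, ht⟩ := (Set.Finite.infinite_compl (α := ℂ) (s := {0, -β}) (by simp)).nonempty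
    simp at ht
    exact ⟨t, ht.1, ht.2⟩
  have hu : IsUnit (algebraMap ℂ A (-t) - w) := by
    by_contra h
    rcases hβ _ (spectrum.mem_iff.2 h) with h | h
    · exact ht0 (by simpa using h)
    · exact htβ (by rw [← h, neg_neg])
  have hwp : Commute w p := by unfold Commute SemiconjBy; rw [h1, h2]
  obtain ⟨γ, hγ⟩ := H (w + t • p) (by rw [mul_add, h1, mul_smul_comm, hp])
    (by rw [add_mul, h2, smul_mul_assoc, hp])
  refine ⟨γ - t, ?_⟩
  intro z hz
  by_contra hz0
  apply spectrum.mem_iff.1 hz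
  by_cases hzγ : z + γ = 0
  · have := isUnit_corner hp hu ((Algebra.commute_algebraMap_left (-t) p).sub_left hwp) hz0
    convert this using 1
    have : γ = -z := by linear_combination hzγ
    subst this
    rw [sub_mul, h2, smul_sub, Algebra.algebraMap_eq_smul_one, Algebra.algebraMap_eq_smul_one,
      smul_mul_assoc, one_mul, sub_smul, neg_smul, neg_smul]
    abel
  · have hu2 : IsUnit (algebraMap ℂ A (z + γ) - (w + t • p)) := by
      by_contra h
      rcases hγ _ (spectrum.mem_iff.2 h) with h | h
      · exact hzγ h
      · exact hz0 (by simpa using h)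
    have := isUnit_corner hp hu2 ((Algebra.commute_algebraMap_left (z + γ) p).sub_left
      (hwp.add_left ((Commute.refl p).smul_left t))) hz0
    convert this using 1
    rw [sub_mul, add_mul, h2, smul_sub, Algebra.algebraMap_eq_smul_one,
      Algebra.algebraMap_eq_smul_one, smul_mul_assoc, smul_mul_assoc, one_mul, hp, add_smul,
      sub_smul]
    abel

lemma corner_qn_zero (hss : TwoSidedIdeal.jacobson (⊥ : TwoSidedIdeal A) = ⊥)
    {p : A} (hp : p * p = p)
    (H : ∀ w, p * w = w → w * p = w → ∃ β, ∀ z ∈ spectrum ℂ w, z = 0 ∨ z = β)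
    {v : A} (h1 : p * v = v) (h2 : v * p = v) (hq : QN v) : v = 0 := by
  refine eq_zero_of_qn_mul hss fun y => ?_
  by_contra hne
  have hne2 : ¬ QN (p * y * p * v) := by
    intro h
    apply hne
    have : QN (v * (p * y)) := by
      apply QN.swap
      rwa [mul_assoc _ p v, h1] at h
    rwa [← mul_assoc, h2] at this
  have e1 : p * (p * y * p * v) = p * y * p * v := by simp only [← mul_assoc, hp]
  have e2 : p * y * p * v * p = p * y * p * v := by rw [mul_assoc _ v, h2]
  obtain ⟨c, hc⟩ := corner_qn hp H e1 e2
  set k := p * y * p * v with hk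
  have hc0 : c ≠ 0 := by
    rintro rfl
    simp at hc
    exact hne2 hc
  have hu : IsUnit (k + c • (1 - p)) := by
    have := hc.neg.isUnit hc0
    convert this using 1
    rw [smul_sub, Algebra.algebraMap_eq_smul_one]; abel
  obtain ⟨u, hu⟩ := hu
  have hup : Commute (u : A) p := by
    rw [hu]
    refine Commute.add_left ?_ (((Commute.one_left p).sub_left (Commute.refl p)).smul_left c)
    unfold Commute SemiconjBy; rw [e1, e2]
  have hsp : Commute (↑u⁻¹ : A) p := hup.units_inv_left
  set s : A := (↑u⁻¹ : A)
  have hup2 : (u : A) * p = k := by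
    rw [hu, add_mul, e2, smul_mul_assoc, sub_mul, hp, one_mul, sub_self, smul_zero, add_zero]
  have hsk : s * k = p := by rw [← hup2, ← mul_assoc, u.inv_mul, one_mul]
  set r := s * (p * y * p) with hr
  have hrv : r * v = p := by rw [hr, mul_assoc, ← hk, hsk]
  have hrp : r * p = r := by rw [hr]; simp only [mul_assoc, hp]
  have hpr : p * r = r := by rw [hr, ← mul_assoc, ← hsp.eq]; simp only [mul_assoc]; simp only [← mul_assoc, hp]
  have hg : (v * r) * (v * r) = v * r := by
    rw [mul_assoc, ← mul_assoc r, hrv, hpr]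
  have hgp : v * r * p = v * r := by rw [mul_assoc, hrp]
  have hpg : p * (v * r) = v * r := by rw [← mul_assoc, h1]
  have hp0 : p ≠ 0 := by
    rintro rfl
    apply hne2
    rw [hk, mul_zero, zero_mul]; intro z hz
    rcases subsingleton_or_nontrivial A with hA | hA
    · simp at hz
    · simpa using hz
  obtain ⟨c', hc'⟩ := corner_qn hp H hpg hgp
  by_cases h0 : c' = 0
  · subst h0
    simp at hc'
    have hz := hc'.idem_eq_zero hg
    apply hp0
    calc p = (r * v) * (r * v) := by rw [hrv, hp]
      _ = r * (v * r) * v := by simp only [mul_assoc]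
      _ = 0 := by rw [hz, mul_zero, zero_mul]
  · have hcomm : Commute (v * r - c' • p) (p - v * r) := by
      have h1 : Commute (v * r) p := by unfold Commute SemiconjBy; rw [hgp, hpg]
      exact (h1.sub_right (Commute.refl _)).sub_left
        (((Commute.refl p).sub_right h1.symm).smul_left c')
    have h3 := (hc'.mul hcomm).neg
    have h4 : -((v * r - c' • p) * (p - v * r)) = c' • (p - v * r) := by
      rw [sub_mul, mul_sub, hgp, hg, smul_mul_assoc, mul_sub, hp, hpg, sub_self, zero_sub, neg_neg]
    rw [h4] at h3
    have h5 := (h3.of_smul h0).idem_eq_zero (by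
      rw [mul_sub, sub_mul, sub_mul, hp, hpg, hgp, hg]; abel)
    have h6 : v * r = p := (sub_eq_zero.1 h5).symm
    have h7 := hq.mul (y := r) (by unfold Commute SemiconjBy; rw [h6, hrv])
    rw [h6] at h7
    exact hp0 (h7.idem_eq_zero hp)

lemma corner_scalar (hss : TwoSidedIdeal.jacobson (⊥ : TwoSidedIdeal A) = ⊥)
    {p : A} (hp : p * p = p)
    (H : ∀ w, p * w = w → w * p = w → ∃ β, ∀ z ∈ spectrum ℂ w, z = 0 ∨ z = β)
    (y : A) : ∃ c : ℂ, p * y * p = c • p := by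
  have e1 : p * (p * y * p) = p * y * p := by simp only [← mul_assoc, hp]
  have e2 : p * y * p * p = p * y * p := by rw [mul_assoc, hp]
  obtain ⟨c, hc⟩ := corner_qn hp H e1 e2
  refine ⟨c, sub_eq_zero.1 (corner_qn_zero hss hp H ?_ ?_ hc)⟩
  · rw [mul_sub, e1, mul_smul_comm, hp]
  · rw [sub_mul, e2, smul_mul_assoc, hp]

lemma riesz {u : A} {L : Finset ℂ} (hL : nzSpec u = L) {l : ℂ} (hl : l ∈ L) :
    ∃ p t : A, p * p = p ∧ p = u * t ∧ Commute u t ∧ p ≠ 0 ∧ (∀ y, Commute y u → Commute y p) ∧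
      QN (u * p - l • p) := by
  classical
  have hl' : l ∈ nzSpec u := by rw [hL]; exact hl
  have hl0 : l ≠ 0 := hl'.2
  let k : Polynomial ℂ := ∏ z ∈ L.erase l, (Polynomial.X - Polynomial.C z)
  have hk0 : ∀ z ∈ L, z ≠ l → k.eval z = 0 := by
    intro z hz hzl
    simp only [k, Polynomial.eval_prod]
    exact Finset.prod_eq_zero (Finset.mem_erase.2 ⟨hzl, hz⟩) (by simp)
  have hkl : k.eval l ≠ 0 := by
    simp only [k, Polynomial.eval_prod]
    refine Finset.prod_ne_zero_iff.2 fun z hz => ?_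
    have := (Finset.mem_erase.1 hz).1
    simpa [sub_eq_zero] using this.symm
  let c : ℂ := (l * k.eval l)⁻¹
  let q : Polynomial ℂ := Polynomial.X * (Polynomial.C c * k)
  have hql : q.eval l = 1 := by
    simp only [q, c, Polynomial.eval_mul, Polynomial.eval_X, Polynomial.eval_C]
    field_simp
  have hσ : ∀ z ∈ spectrum ℂ u, z = 0 ∨ z ∈ L := by
    intro z hz
    by_cases h : z = 0
    · exact Or.inl h
    · right
      have : z ∈ nzSpec u := ⟨hz, h⟩
      rw [hL] at this; exact this
  have hq0 : ∀ z ∈ spectrum ℂ u, z ≠ l → q.eval z = 0 := by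
    intro z hz hzl
    rcases hσ z hz with rfl | h
    · simp [q]
    · simp [q, hk0 z h hzl]
  set h := Polynomial.aeval u q with hh
  have hn : QN (h * h - h) := by
    have := qn_aeval (x := u) (p := q * q - q) (by
      intro z hz
      by_cases hzl : z = l
      · subst hzl; simp [hql]
      · simp [hq0 z hz hzl])
    simpa using this
  have hcu : ∀ y, Commute y u → Commute y h := by
    intro y hy
    refine Polynomial.induction_on' (motive := fun q => Commute y (Polynomial.aeval u q)) q ?_ ?_
    · intro p1 p2 h1 h2; rw [map_add]; exact h1.add_right h2
    · intro n a
      rw [Polynomial.aeval_monomial]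
      exact (Algebra.commute_algebraMap_right a y).mul_right (hy.pow_right n)
  obtain ⟨e, r, he, her, hr⟩ := exists_idem_lift hn
  have hce : ∀ y, Commute y u → Commute y e := by
    intro y hy
    have h1 := hcu y hy
    rw [her]
    exact h1.add_right (((h1.mul_right h1).sub_right h1).mul_right (hr y h1))
  have huh : Commute u h := hcu u (Commute.refl u)
  set m := Polynomial.aeval u (Polynomial.C c * k) with hm
  have hhm : h = u * m := by simp [hh, hm, q]
  have hum : Commute u m := by
    have : Commute (Polynomial.aeval u (Polynomial.X : Polynomial ℂ)) m := by
      unfold Commute SemiconjBy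
      rw [hm, ← map_mul, ← map_mul, mul_comm]
    simpa using this
  have hur := hr u huh
  have hhr := hr h (Commute.refl h)
  have hqe : QN (e - h) := by
    rw [her, add_sub_cancel_left]
    exact hn.mul ((hhr.mul_left hhr).sub_left hhr)
  refine ⟨e, m * (1 + (h - 1) * r), he, ?_, ?_, ?_, hce, ?_⟩
  · have : h * h - h = h * (h - 1) := by rw [mul_sub, mul_one]
    rw [her, this, ← mul_assoc, ← hhm, mul_add, mul_one, mul_assoc]
  · exact hum.mul_right ((Commute.one_right u).add_right
      ((huh.sub_right (Commute.one_right u)).mul_right hur))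
  · intro h0
    rw [h0, zero_sub] at hqe
    have hq := hqe.neg
    rw [neg_neg] at hq
    have h1 : (1 : ℂ) ∈ spectrum ℂ h := by
      have := spectrum.subset_polynomial_aeval u q
      rw [← hql]
      exact this ⟨l, hl'.1, rfl⟩
    exact one_ne_zero (hq 1 h1)
  · have q1 : QN (u * h - l • h) := by
      have := qn_aeval (x := u) (p := Polynomial.X * q - Polynomial.C l * q) (by
        intro z hz
        by_cases hzl : z = l
        · subst hzl; simp
        · simp [hq0 z hz hzl])
      simpa [Algebra.smul_def] using this
    have hue := hce u (Commute.refl u)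
    have hhe := hce h huh.symm
    have cul : Commute (u - algebraMap ℂ A l) e := hue.sub_left (Algebra.commutes l e)
    have culh : Commute (u - algebraMap ℂ A l) h := huh.sub_left (Algebra.commutes l h)
    have q2 := hqe.mul (y := u - algebraMap ℂ A l) (cul.symm.sub_left culh.symm)
    have e3 : u * e - l • e = (u * h - l • h) + (e - h) * (u - algebraMap ℂ A l) := by
      have : (e - h) * (u - algebraMap ℂ A l) = (u - algebraMap ℂ A l) * (e - h) :=
        (cul.symm.sub_left culh.symm).eq
      rw [this, Algebra.smul_def, Algebra.smul_def]; noncomm_ring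
    rw [e3]
    have e4 : u * h - l • h = (u - algebraMap ℂ A l) * h := by
      rw [Algebra.smul_def, sub_mul]
    refine q1.add q2 ?_
    rw [e4]
    refine Commute.mul_right ?_ ?_
    · refine Commute.mul_left ?_ ?_
      · exact cul.sub_right culh
      · exact hhe.sub_right (Commute.refl h)
    · exact (Commute.refl _).mul_left culh.symm

end Corner

section LocalCorner
open Filter Topology
set_option maxSynthPendingDepth 5
variable {A : Type*} [NormedRing A] [NormedAlgebra ℂ A] [CompleteSpace A]

lemma smul_spec_two {Y : A} {γ μ : ℂ} (hμ : μ ≠ 0) (h : ∀ z ∈ spectrum ℂ Y, z = 0 ∨ z = γ) :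
    ∀ z ∈ spectrum ℂ (μ • Y), z = 0 ∨ z = μ * γ := by
  intro z hz
  have h1 : μ⁻¹ * z ∈ spectrum ℂ Y := by
    rw [spectrum.mem_iff] at hz ⊢
    intro hu
    apply hz
    have := hu.smul (Units.mk0 μ hμ)
    convert this using 1
    rw [Units.smul_def, Units.val_mk0, smul_sub, Algebra.algebraMap_eq_smul_one,
      Algebra.algebraMap_eq_smul_one, smul_smul, mul_inv_cancel_left₀ hμ]
  rcases h _ h1 with h | h
  · left; simpa [hμ] using h
  · right; rw [← h, mul_inv_cancel_left₀ hμ]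

lemma TT_differentiable (x y : A) : Differentiable ℂ (fun μ : ℂ => TT (x + μ • y)) := by
  have h0 : Differentiable ℂ (fun μ : ℂ => x + μ • y) := by fun_prop
  have h1 : Differentiable ℂ (fun μ : ℂ => T1 A (x + μ • y)) := (T1 A).differentiable.comp h0
  have h2 : Differentiable ℂ (fun μ : ℂ => T2 A (x + μ • y)) := (T2 A).differentiable.comp h0
  exact (h1.mul h2).mul (h1.sub h2)

lemma two_point_of_circle {w v : A} {R : ℝ} (hR : 0 < R)
    (h : ∀ μ : ℂ, ‖μ‖ = R → ∃ γ, ∀ z ∈ spectrum ℂ (w + μ • v), z = 0 ∨ z = γ) :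
    ∃ β, ∀ z ∈ spectrum ℂ w, z = 0 ∨ z = β := by
  have hq : QN (TT w) := by
    have := qn_max (TT_differentiable w v) hR (fun μ hμ => by
      obtain ⟨γ, hγ⟩ := h μ hμ
      exact qn_TT hγ)
    simpa using this
  have key : ∀ α ∈ frontier (spectrum ℂ w), ∀ β ∈ frontier (spectrum ℂ w),
      α * β * (α - β) = 0 := by
    intro α hα β hβ
    obtain ⟨f, hf0, hf⟩ := exists_functional_s13 hα
    obtain ⟨g, hg0, hg⟩ := exists_functional_s13 hβ
    exact TT_eig hq hf0 hg0 hf hg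
  have : ∃ β, frontier (spectrum ℂ w) ⊆ {0, β} := by
    by_cases hb : ∃ β ∈ frontier (spectrum ℂ w), β ≠ 0
    · obtain ⟨β, hβ, hβ0⟩ := hb
      refine ⟨β, fun α hα => ?_⟩
      have := key α hα β hβ
      simp only [mul_eq_zero, sub_eq_zero, hβ0, or_false] at this
      simpa using this
    · push Not at hb
      exact ⟨0, fun α hα => by simp [hb α hα]⟩
  obtain ⟨β, hβ⟩ := this
  refine ⟨β, fun z hz => ?_⟩
  have := subset_of_frontier (spectrum.isCompact w) (by simp) hβ hz
  simpa using this

lemma corner_two (b : A) {N : Set A} (hN : IsOpen N) {x0 : A} (hx0 : x0 ∈ N) (L : Finset ℂ)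
    (hL : (L : Set ℂ) = nzSpec (b * x0)) (hmax : ∀ x ∈ N, (nzSpec (b * x)).encard ≤ L.card)
    {l : ℂ} (hl : l ∈ L) {p t : A} (hp : p * p = p) (hpt : p = b * x0 * t)
    (hcp : Commute (b * x0) p) (hq : QN (b * x0 * p - l • p)) {w : A} (h1 : p * w = w)
    (h2 : w * p = w) : ∃ β, ∀ z ∈ spectrum ℂ w, z = 0 ∨ z = β := by
  obtain ⟨ρ, hρ, hsep, hev⟩ := local_structure b hN hx0 L hL hmax
  set u := b * x0 with hu
  have h0L : (0 : ℂ) ∉ L := by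
    intro h
    have : (0 : ℂ) ∈ nzSpec u := by rw [← hL]; exact h
    exact this.2 rfl
  have hσ : spectrum ℂ (u * p) ⊆ Metric.ball 0 ρ ∪ Metric.ball l ρ := by
    intro z hz
    have hqq : QN (Polynomial.aeval (u * p) (Polynomial.X * Polynomial.X - Polynomial.C l * Polynomial.X : Polynomial ℂ)) := by
      have e : Polynomial.aeval (u * p) (Polynomial.X * Polynomial.X - Polynomial.C l * Polynomial.X : Polynomial ℂ)
          = (u * p - l • p) * u := by
        simp only [map_sub, map_mul, Polynomial.aeval_X, Polynomial.aeval_C, sub_mul,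
          ← Algebra.smul_def, smul_mul_assoc]
        have e5 : u * p * (u * p) = u * p * u := by
          calc u * p * (u * p) = u * p * (p * u) := by rw [hcp.eq]
            _ = u * (p * p) * u := by simp only [mul_assoc]
            _ = _ := by rw [hp]
        rw [e5, hcp.eq]
      rw [e]
      exact hq.mul (((Commute.refl u).mul_left hcp.symm).sub_left (hcp.symm.smul_left l))
    have := hqq _ (spectrum.subset_polynomial_aeval _ _ ⟨z, hz, rfl⟩)
    have h3 : z * (z - l) = 0 := by
      simp at this
      linear_combination this
    rcases mul_eq_zero.1 h3 with h | h
    · left; simp [h, hρ]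
    · right; simp [sub_eq_zero.1 h, hρ]
  have hev2 := (upperHemicontinuous_spectrum ℂ A).forall_isOpen (u * p)
    (Metric.ball 0 ρ ∪ Metric.ball l ρ) (Metric.isOpen_ball.union Metric.isOpen_ball) hσ
  have c1 : Tendsto (fun ε : ℂ => u * p + ε • w) (𝓝 0) (𝓝 (u * p)) := by
    have : Continuous (fun ε : ℂ => u * p + ε • w) := by fun_prop
    have := this.tendsto 0
    simpa using this
  have c2 : Tendsto (fun ε : ℂ => x0 + ε • (x0 * t * w)) (𝓝 0) (𝓝 x0) := by
    have : Continuous (fun ε : ℂ => x0 + ε • (x0 * t * w)) := by fun_prop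
    have := this.tendsto 0
    simpa using this
  have hall := (c1.eventually hev2).and (c2.eventually hev)
  obtain ⟨δ, hδ, hball⟩ := Metric.eventually_nhds_iff.1 hall
  have hwp : Commute w p := by unfold Commute SemiconjBy; rw [h1, h2]
  have main : ∀ ε : ℂ, ‖ε‖ < δ → ∃ γ, ∀ z ∈ spectrum ℂ (u * p + ε • w), z = 0 ∨ z = γ := by
    intro ε hε
    obtain ⟨hA, g, hg, hgL⟩ := hball (y := ε) (by simpa using hε)
    refine ⟨g l, fun z hz => ?_⟩
    by_cases hz0 : z = 0
    · exact Or.inl hz0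
    right
    have hX : b * (x0 + ε • (x0 * t * w)) = u + ε • w := by
      rw [mul_add, mul_smul_comm, ← mul_assoc, ← mul_assoc, ← hu, ← hpt, h1]
    rw [hX] at hgL
    have hzX : z ∈ spectrum ℂ (u + ε • w) := by
      rw [spectrum.mem_iff] at hz ⊢
      intro hunit
      apply hz
      have := isUnit_corner hp hunit ((Algebra.commute_algebraMap_left z p).sub_left
        (hcp.add_left (hwp.smul_left ε))) hz0
      convert this using 1
      rw [sub_mul, add_mul, smul_mul_assoc, h2, smul_sub, Algebra.algebraMap_eq_smul_one,
        smul_mul_assoc, one_mul]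
      abel
    have hzm : z ∈ nzSpec (u + ε • w) := ⟨hzX, hz0⟩
    rw [hgL] at hzm
    obtain ⟨l', hl', rfl⟩ := hzm
    have hl'L : l' ∈ L := hl'
    by_cases hll : l' = l
    · rw [hll]
    exfalso
    have d1 := hg l' hl'L
    rcases hA hz with h | h
    · have d2 := hsep l' (Finset.mem_insert_of_mem hl'L) 0 (Finset.mem_insert_self _ _)
        (by rintro rfl; exact h0L hl'L)
      have d3 := Metric.mem_ball.1 h
      have := dist_triangle_left l' 0 (g l')
      linarith
    · have d2 := hsep l' (Finset.mem_insert_of_mem hl'L) l (Finset.mem_insert_of_mem hl) hll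
      have d3 := Metric.mem_ball.1 h
      have := dist_triangle_left l' l (g l')
      linarith
  refine two_point_of_circle (v := u * p) (R := 2 / δ) (by positivity) fun μ hμ => ?_
  have hμ0 : μ ≠ 0 := by
    rw [← norm_pos_iff, hμ]; positivity
  obtain ⟨γ, hγ⟩ := main μ⁻¹ (by
    rw [norm_inv, hμ, inv_div]; linarith)
  refine ⟨μ * γ, ?_⟩
  have := smul_spec_two hμ0 hγ
  rwa [smul_add, smul_smul, mul_inv_cancel₀ hμ0, one_smul, add_comm] at this

end LocalCorner

section Structure
open Filter Topology
variable {A : Type*} [NormedRing A] [NormedAlgebra ℂ A] [CompleteSpace A]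

lemma mem_spec_of_eig {X p : A} {z : ℂ} (hp : p ≠ 0) (h : X * p = z • p) : z ∈ spectrum ℂ X := by
  rw [spectrum.mem_iff]
  rintro ⟨u, hu⟩
  apply hp
  have h1 : (u : A) * p = 0 := by rw [hu, sub_mul, h, ← Algebra.smul_def, sub_self]
  calc p = (↑u⁻¹ : A) * (u * p) := by rw [← mul_assoc, u.inv_mul, one_mul]
    _ = 0 := by rw [h1, mul_zero]

/-- a finite family of mutually orthogonal nonzero idempotents with scalar corners -/
structure OrthoFam (L : Finset ℂ) (p : ℂ → A) : Prop where
  zero_notMem : (0 : ℂ) ∉ L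
  idem : ∀ l ∈ L, p l * p l = p l
  ne : ∀ l ∈ L, p l ≠ 0
  ortho : ∀ l ∈ L, ∀ m ∈ L, l ≠ m → p l * p m = 0
  corner : ∀ l ∈ L, ∀ y, ∃ c : ℂ, p l * y * p l = c • p l

lemma OrthoFam.sum_mul {L : Finset ℂ} {p : ℂ → A} (h : OrthoFam L p) (f : ℂ → ℂ) {l : ℂ}
    (hl : l ∈ L) : (∑ m ∈ L, f m • p m) * p l = f l • p l := by
  rw [Finset.sum_mul, Finset.sum_eq_single l]
  · rw [smul_mul_assoc, h.idem l hl]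
  · intro m hm hml
    rw [smul_mul_assoc, h.ortho m hm l hl hml, smul_zero]
  · intro h; exact absurd hl h

lemma OrthoFam.mul_sum {L : Finset ℂ} {p : ℂ → A} (h : OrthoFam L p) (f : ℂ → ℂ) {l : ℂ}
    (hl : l ∈ L) : p l * (∑ m ∈ L, f m • p m) = f l • p l := by
  rw [Finset.mul_sum, Finset.sum_eq_single l]
  · rw [mul_smul_comm, h.idem l hl]
  · intro m hm hml
    rw [mul_smul_comm, h.ortho l hl m hm hml.symm, smul_zero]
  · intro h; exact absurd hl h

lemma OrthoFam.sum_mul_sum {L : Finset ℂ} {p : ℂ → A} (h : OrthoFam L p) (f g : ℂ → ℂ) :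
    (∑ m ∈ L, f m • p m) * (∑ m ∈ L, g m • p m) = ∑ m ∈ L, (f m * g m) • p m := by
  rw [Finset.mul_sum]
  refine Finset.sum_congr rfl fun l hl => ?_
  rw [mul_smul_comm, h.sum_mul f hl, smul_smul, mul_comm]

lemma exists_orthoFam (hss : TwoSidedIdeal.jacobson (⊥ : TwoSidedIdeal A) = ⊥)
    (b : A) {N : Set A} (hN : IsOpen N) {x0 : A} (hx0 : x0 ∈ N) (L : Finset ℂ)
    (hL : (L : Set ℂ) = nzSpec (b * x0)) (hmax : ∀ x ∈ N, (nzSpec (b * x)).encard ≤ L.card) :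
    ∃ p : ℂ → A, OrthoFam L p ∧ (∀ l ∈ L, b * x0 * p l = l • p l) ∧
      (∀ l ∈ L, p l * (b * x0) = l • p l) := by
  have hz : (0 : ℂ) ∉ L := by
    intro h
    have : (0 : ℂ) ∈ nzSpec (b * x0) := by rw [← hL]; exact h
    exact this.2 rfl
  have hr : ∀ l : ℂ, ∃ p t : A, l ∈ L → p * p = p ∧ p = b * x0 * t ∧ Commute (b * x0) t ∧ p ≠ 0 ∧
      (∀ y, Commute y (b * x0) → Commute y p) ∧ QN (b * x0 * p - l • p) := by
    intro l
    by_cases hl : l ∈ L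
    · obtain ⟨p, t, h⟩ := riesz hL.symm hl
      exact ⟨p, t, fun _ => h⟩
    · exact ⟨0, 0, fun h => absurd h hl⟩
  choose p t h using hr
  have hcor : ∀ l ∈ L, ∀ y, ∃ c : ℂ, p l * y * p l = c • p l := by
    intro l hl
    obtain ⟨h1, h2, h3, h4, h5, h6⟩ := h l hl
    exact corner_scalar hss h1 (fun w hw1 hw2 =>
      corner_two b hN hx0 L hL hmax hl h1 h2 (h5 _ (Commute.refl _)) h6 hw1 hw2)
  have hup : ∀ l ∈ L, b * x0 * p l = l • p l := by
    intro l hl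
    obtain ⟨h1, h2, h3, h4, h5, h6⟩ := h l hl
    obtain ⟨c, hc⟩ := hcor l hl (b * x0)
    have hcm : Commute (b * x0) (p l) := h5 _ (Commute.refl _)
    rw [← hcm.eq, mul_assoc, h1] at hc
    rw [hc, ← sub_smul] at h6
    by_cases hcl : c - l = 0
    · rw [hc, sub_eq_zero.1 hcl]
    · exact absurd ((h6.of_smul hcl).idem_eq_zero h1) h4
  have hpu : ∀ l ∈ L, p l * (b * x0) = l • p l := by
    intro l hl
    obtain ⟨h1, h2, h3, h4, h5, h6⟩ := h l hl
    have hcm : Commute (b * x0) (p l) := h5 _ (Commute.refl _)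
    rw [← hcm.eq, hup l hl]
  refine ⟨p, ⟨hz, fun l hl => (h l hl).1, fun l hl => (h l hl).2.2.2.1, ?_, hcor⟩, hup, hpu⟩
  intro l hl m hm hlm
  have e1 : (p l * (b * x0)) * p m = l • (p l * p m) := by rw [hpu l hl, smul_mul_assoc]
  rw [mul_assoc, hup m hm, mul_smul_comm] at e1
  have : (m - l) • (p l * p m) = 0 := by rw [sub_smul, e1, sub_self]
  rcases smul_eq_zero.1 this with h | h
  · exact absurd (sub_eq_zero.1 h).symm hlm
  · exact h

lemma exists_small (x y : A) {N : Set A} (hN : IsOpen N) (hx : x ∈ N) :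
    ∃ δ : ℝ, 0 < δ ∧ ∀ l : ℂ, ‖l‖ ≤ δ → x + l • y ∈ N := by
  have c : Tendsto (fun ε : ℂ => x + ε • y) (𝓝 0) (𝓝 x) := by
    have : Continuous (fun ε : ℂ => x + ε • y) := by fun_prop
    have := this.tendsto 0
    simpa using this
  obtain ⟨δ, hδ, hb⟩ := Metric.eventually_nhds_iff.1 (c.eventually (hN.mem_nhds hx))
  exact ⟨δ / 2, by positivity, fun l hl => hb (y := l) (by
    rw [dist_zero_right]; linarith)⟩

lemma range_b (hss : TwoSidedIdeal.jacobson (⊥ : TwoSidedIdeal A) = ⊥)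
    (b : A) {N : Set A} (hN : IsOpen N) {x0 : A} (hx0 : x0 ∈ N) (L : Finset ℂ)
    (hmax : ∀ x ∈ N, (nzSpec (b * x)).encard ≤ L.card)
    {p : ℂ → A} (hp : OrthoFam L p) (hup : ∀ l ∈ L, b * x0 * p l = l • p l) :
    (∑ l ∈ L, p l) * b = b := by
  set P := ∑ l ∈ L, p l with hP
  have hPp : ∀ l ∈ L, P * p l = p l := by
    intro l hl
    have := hp.sum_mul (fun _ => 1) hl
    simpa using this
  have key : (1 - P) * b = 0 := by
    refine eq_zero_of_qn_mul hss fun y => ?_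
    have hq : QN (b * y * (1 - P)) := by
      obtain ⟨δ, hδ, hb⟩ := exists_small x0 (y * (1 - P)) hN hx0
      refine qn_of_finite_spec (u := b * x0) (insert 0 L) hδ fun l hl z hz => ?_
      have hx := hb l hl
      have e : b * x0 + l • (b * y * (1 - P)) = b * (x0 + l • (y * (1 - P))) := by
        rw [mul_add, mul_smul_comm, mul_assoc]
      rw [e] at hz
      by_cases hz0 : z = 0
      · simp [hz0]
      have hsub : (L : Set ℂ) ⊆ nzSpec (b * (x0 + l • (y * (1 - P)))) := by
        intro m hm
        refine ⟨mem_spec_of_eig (hp.ne m hm) ?_, fun h0 => hp.zero_notMem ?_⟩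
        · rw [← e, add_mul, hup m hm, smul_mul_assoc, mul_assoc, sub_mul, hPp m hm, one_mul,
            sub_self, mul_zero, smul_zero, add_zero]
        · rw [← (show m = 0 from h0)]; exact hm
      have heq := (L.finite_toSet).eq_of_subset_of_encard_le hsub (by
        rw [Set.encard_coe_eq_coe_finsetCard]; exact hmax _ hx)
      have hzm : z ∈ (L : Set ℂ) := by rw [heq]; exact ⟨hz, hz0⟩
      exact Finset.mem_insert_of_mem hzm
    have := hq.swap
    rwa [← mul_assoc] at this
  rw [sub_mul, one_mul, sub_eq_zero] at key
  exact key.symm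

lemma ann_a (hss : TwoSidedIdeal.jacobson (⊥ : TwoSidedIdeal A) = ⊥)
    (a b : A) {N : Set A} (hN : IsOpen N) {x0 : A} (hx0 : x0 ∈ N) (L : Finset ℂ)
    (hL : (L : Set ℂ) = nzSpec (b * x0))
    (hsub : ∀ x ∈ N, nzSpec (a * x) ⊆ nzSpec (b * x)) {y : A} (hy : b * y = 0) : a * y = 0 := by
  refine eq_zero_of_qn_mul hss fun s => ?_
  obtain ⟨δ, hδ, hb⟩ := exists_small x0 (y * s) hN hx0
  refine qn_of_finite_spec (u := a * x0) (insert 0 L) hδ fun l hl z hz => ?_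
  have e : a * x0 + l • (a * y * s) = a * (x0 + l • (y * s)) := by
    rw [mul_add, mul_smul_comm, mul_assoc]
  have e2 : b * (x0 + l • (y * s)) = b * x0 := by
    rw [mul_add, mul_smul_comm, ← mul_assoc, hy, zero_mul, smul_zero, add_zero]
  rw [e] at hz
  by_cases hz0 : z = 0
  · simp [hz0]
  have := hsub _ (hb l hl) ⟨hz, hz0⟩
  rw [e2, ← hL] at this
  exact Finset.mem_insert_of_mem this

lemma nzSpec_comm (x y : A) : nzSpec (x * y) = nzSpec (y * x) :=
  spectrum.nonzero_mul_comm x y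

lemma ann_a_left (hss : TwoSidedIdeal.jacobson (⊥ : TwoSidedIdeal A) = ⊥)
    (a b : A) {N : Set A} (hN : IsOpen N) {x0 : A} (hx0 : x0 ∈ N) (L : Finset ℂ)
    (hL : (L : Set ℂ) = nzSpec (b * x0))
    (hsub : ∀ x ∈ N, nzSpec (a * x) ⊆ nzSpec (b * x)) {y : A} (hy : y * b = 0) : y * a = 0 := by
  refine eq_zero_of_qn_mul hss fun s => ?_
  have : QN (s * y * a) := by
    obtain ⟨δ, hδ, hb⟩ := exists_small x0 (s * y) hN hx0
    refine qn_of_finite_spec (u := x0 * a) (insert 0 L) hδ fun l hl z hz => ?_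
    have e : x0 * a + l • (s * y * a) = (x0 + l • (s * y)) * a := by
      rw [add_mul, smul_mul_assoc]
    have e2 : (x0 + l • (s * y)) * b = x0 * b := by
      rw [add_mul, smul_mul_assoc, mul_assoc, hy, mul_zero, smul_zero, add_zero]
    rw [e] at hz
    by_cases hz0 : z = 0
    · simp [hz0]
    have hz' : z ∈ nzSpec ((x0 + l • (s * y)) * a) := ⟨hz, hz0⟩
    rw [nzSpec_comm] at hz'
    have := hsub _ (hb l hl) hz'
    rw [nzSpec_comm, e2, nzSpec_comm, ← hL] at this
    exact Finset.mem_insert_of_mem this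
  rw [mul_assoc] at this
  exact this.swap

end Structure

section Core
open Filter Topology
variable {A : Type*} [NormedRing A] [NormedAlgebra ℂ A] [CompleteSpace A]

lemma exists_small_avoid (F : Finset ℂ) {δ : ℝ} (hδ : 0 < δ) : ∃ z : ℂ, ‖z‖ ≤ δ ∧ z ∉ F := by
  have h : (Metric.closedBall (0 : ℂ) δ).Infinite :=
    infinite_of_mem_nhds (0 : ℂ) (Metric.closedBall_mem_nhds 0 hδ)
  obtain ⟨z, hz, hzF⟩ := h.exists_notMem_finset F
  exact ⟨z, by simpa using hz, hzF⟩

lemma OrthoFam.spec {L : Finset ℂ} {p : ℂ → A} (h : OrthoFam L p) (f : ℂ → ℂ) {z : ℂ}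
    (hz : z ∈ spectrum ℂ (∑ l ∈ L, f l • p l)) : z = 0 ∨ ∃ l ∈ L, z = f l := by
  by_contra! hcon
  obtain ⟨hz0, hne⟩ := hcon
  apply spectrum.mem_iff.1 hz
  set P := ∑ l ∈ L, (1 : ℂ) • p l with hP
  have hPP : P * P = P := by rw [hP, h.sum_mul_sum]; simp
  have hPD : ∀ g : ℂ → ℂ, P * (∑ l ∈ L, g l • p l) = ∑ l ∈ L, g l • p l := by
    intro g; rw [hP, h.sum_mul_sum]; simp
  have hDP : ∀ g : ℂ → ℂ, (∑ l ∈ L, g l • p l) * P = ∑ l ∈ L, g l • p l := by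
    intro g; rw [hP, h.sum_mul_sum]; simp
  have e1 : algebraMap ℂ A z - ∑ l ∈ L, f l • p l = z • (1 - P) + ∑ l ∈ L, (z - f l) • p l := by
    rw [hP, smul_sub, Algebra.algebraMap_eq_smul_one, Finset.smul_sum]
    simp only [sub_smul, Finset.sum_sub_distrib, one_smul]
    abel
  have q1 : (1 - P) * (1 - P) = 1 - P := by
    rw [mul_sub, mul_one, sub_mul, hPP]; simp
  have key : ∀ (s t : ℂ) (g k : ℂ → ℂ), s * t = 1 → (∀ l ∈ L, g l * k l = 1) →
      (s • (1 - P) + ∑ l ∈ L, g l • p l) * (t • (1 - P) + ∑ l ∈ L, k l • p l) = 1 := by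
    intro s t g k hst hgk
    have f1 : (∑ l ∈ L, g l • p l) * (1 - P) = 0 := by rw [mul_sub, hDP, mul_one, sub_self]
    have f2 : (1 - P) * (∑ l ∈ L, k l • p l) = 0 := by rw [sub_mul, hPD, one_mul, sub_self]
    have f3 : (∑ l ∈ L, g l • p l) * (∑ l ∈ L, k l • p l) = P := by
      rw [h.sum_mul_sum, hP]
      exact Finset.sum_congr rfl fun l hl => by rw [hgk l hl]
    rw [add_mul, mul_add, mul_add, smul_mul_smul_comm, q1, hst, mul_smul_comm, f1, smul_mul_assoc,
      f2, f3]
    simp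
  rw [e1]
  have hd : ∀ l ∈ L, z - f l ≠ 0 := fun l hl => sub_ne_zero.2 (hne l hl)
  exact ⟨⟨_, _, key z z⁻¹ _ (fun l => (z - f l)⁻¹) (mul_inv_cancel₀ hz0)
    (fun l hl => mul_inv_cancel₀ (hd l hl)),
    key z⁻¹ z (fun l => (z - f l)⁻¹) _ (inv_mul_cancel₀ hz0)
    (fun l hl => inv_mul_cancel₀ (hd l hl))⟩, rfl⟩

lemma spec_conj {v X : A} (hv : v * v = 0) :
    spectrum ℂ ((1 + v) * X * (1 - v)) = spectrum ℂ X := by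
  let u : Aˣ := ⟨1 + v, 1 - v, by
    rw [mul_sub, mul_one, add_mul, hv]; simp, by rw [mul_add, mul_one, sub_mul, hv]; simp⟩
  exact spectrum.units_conjugate (a := X) (u := u)

lemma offdiag (hss : TwoSidedIdeal.jacobson (⊥ : TwoSidedIdeal A) = ⊥) {L : Finset ℂ} {p : ℂ → A}
    (hp : OrthoFam L p) {α : A}
    (hloc : ∀ᶠ u in 𝓝 (∑ l ∈ L, l • p l), (∑ l ∈ L, p l) * u = u → nzSpec (α * u) ⊆ nzSpec u)
    {i j : ℂ} (hi : i ∈ L) (hj : j ∈ L) (hij : i ≠ j) : p j * α * p i = 0 := by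
  refine eq_zero_of_qn_mul hss fun y => ?_
  set u0 := ∑ l ∈ L, l • p l with hu0
  set P := ∑ l ∈ L, p l with hP
  have hP' : P = ∑ l ∈ L, (1 : ℂ) • p l := by simp [hP]
  have hPu0 : P * u0 = u0 := by
    rw [hP', hu0, hp.sum_mul_sum]; simp
  have hPi : P * p i = p i := by
    rw [hP', hp.sum_mul (fun _ => 1) hi, one_smul]
  set v := p i * y * p j with hv
  have hPv : P * v = v := by rw [hv, ← mul_assoc, ← mul_assoc, hPi]
  have huv : u0 * v = i • v := by
    rw [hv, ← mul_assoc, ← mul_assoc, hu0, hp.sum_mul (fun l => l) hi, smul_mul_assoc,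
      smul_mul_assoc]
  have hvu : v * u0 = j • v := by
    rw [hv, mul_assoc, hu0, hp.mul_sum (fun l => l) hj, mul_smul_comm]
  have hvv : v * v = 0 := by
    rw [hv]
    calc p i * y * p j * (p i * y * p j) = p i * y * (p j * p i) * y * p j := by
          simp only [mul_assoc]
      _ = 0 := by rw [hp.ortho j hj i hi hij.symm]; simp
  have hq : QN (α * v) := by
    obtain ⟨W, hW1, hW2, hW3⟩ := eventually_nhds_iff.1 hloc
    obtain ⟨δ, hδ, hb⟩ := exists_small u0 v hW2 hW3
    refine qn_of_finite_spec (u := α * u0) (insert 0 L) hδ fun m hm z hz => ?_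
    by_cases hz0 : z = 0
    · simp [hz0]
    have h1 := hW1 _ (hb m hm) (by rw [mul_add, hPu0, mul_smul_comm, hPv])
    have h2 : z ∈ nzSpec (u0 + m • v) := by
      apply h1
      refine ⟨?_, hz0⟩
      rwa [mul_add, mul_smul_comm]
    have hji : j - i ≠ 0 := sub_ne_zero.2 hij.symm
    have h3 : u0 + m • v = (1 + (m / (j - i)) • v) * u0 * (1 - (m / (j - i)) • v) := by
      set c := m / (j - i)
      have hc : m = c * j - c * i := by simp only [c]; field_simp
      rw [add_mul, one_mul, smul_mul_assoc, hvu, mul_sub, mul_one, add_mul, mul_smul_comm, huv,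
        mul_smul_comm, smul_mul_assoc, smul_mul_assoc, hvv, smul_zero, smul_zero, smul_zero,
        add_zero, smul_smul, smul_smul, add_sub_assoc, ← sub_smul, hc]
    rw [h3] at h2
    have h4 := h2.1
    rw [spec_conj (by rw [smul_mul_smul_comm, hvv, smul_zero]), hu0] at h4
    rcases hp.spec (fun l => l) h4 with h | ⟨l, hl, rfl⟩
    · exact absurd h hz0
    · exact Finset.mem_insert_of_mem hl
  have h5 : QN (α * p i * y * p j) := by
    convert hq using 1; rw [hv]; simp only [mul_assoc]
  have := h5.swap
  convert this using 1; simp only [mul_assoc]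

lemma alpha_diag (hss : TwoSidedIdeal.jacobson (⊥ : TwoSidedIdeal A) = ⊥) {L : Finset ℂ}
    {p : ℂ → A} (hp : OrthoFam L p) {α : A}
    (h1 : (∑ l ∈ L, p l) * α = α) (h2 : α * (∑ l ∈ L, p l) = α)
    (hloc : ∀ᶠ u in 𝓝 (∑ l ∈ L, l • p l), (∑ l ∈ L, p l) * u = u → nzSpec (α * u) ⊆ nzSpec u) :
    ∃ c : ℂ → ℂ, α = ∑ l ∈ L, c l • p l := by
  have : ∀ l : ℂ, ∃ c : ℂ, l ∈ L → p l * α * p l = c • p l := by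
    intro l
    by_cases hl : l ∈ L
    · obtain ⟨c, hc⟩ := hp.corner l hl α
      exact ⟨c, fun _ => hc⟩
    · exact ⟨0, fun h => absurd h hl⟩
  choose c hc using this
  refine ⟨c, ?_⟩
  calc α = (∑ l ∈ L, p l) * α * (∑ l ∈ L, p l) := by rw [h1, h2]
    _ = ∑ l ∈ L, ∑ m ∈ L, p l * α * p m := by
      rw [Finset.sum_mul, Finset.sum_mul]
      exact Finset.sum_congr rfl fun l _ => Finset.mul_sum _ _ _
    _ = _ := by
      refine Finset.sum_congr rfl fun l hl => ?_
      rw [Finset.sum_eq_single l, hc l hl]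
      · intro m hm hml
        exact offdiag hss hp hloc hm hl hml
      · intro h; exact absurd hl h

lemma alpha_zero_one {L : Finset ℂ} {p : ℂ → A} (hp : OrthoFam L p) {c : ℂ → ℂ}
    (hloc : ∀ᶠ u in 𝓝 (∑ l ∈ L, l • p l), (∑ l ∈ L, p l) * u = u →
      nzSpec ((∑ l ∈ L, c l • p l) * u) ⊆ nzSpec u) {i : ℂ} (hi : i ∈ L) : c i = 0 ∨ c i = 1 := by
  by_contra! hcon
  obtain ⟨hc0, hc1⟩ := hcon
  obtain ⟨W, hW1, hW2, hW3⟩ := eventually_nhds_iff.1 hloc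
  obtain ⟨δ, hδ, hb⟩ := exists_small _ (p i) hW2 hW3
  obtain ⟨z, hz, hzF⟩ := exists_small_avoid ((insert 0 L).image (fun k => k / c i - i)) hδ
  have hzF' : ∀ k ∈ insert 0 L, c i * (i + z) ≠ k := by
    intro k hk he
    apply hzF
    refine Finset.mem_image.2 ⟨k, hk, ?_⟩
    rw [← he]; field_simp; ring
  let f : ℂ → ℂ := fun l => l + if l = i then z else 0
  have hu : (∑ l ∈ L, l • p l) + z • p i = ∑ l ∈ L, f l • p l := by
    simp only [f, add_smul, Finset.sum_add_distrib, ite_smul, zero_smul]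
    rw [Finset.sum_ite_eq' L i, if_pos hi]
  have h1 := hW1 _ (hb z hz) (by
    rw [hu]
    have := hp.sum_mul_sum (fun _ => 1) f
    simpa using this)
  rw [hu] at h1
  have hmem : c i * (i + z) ∈ nzSpec ((∑ l ∈ L, c l • p l) * ∑ l ∈ L, f l • p l) := by
    refine ⟨mem_spec_of_eig (hp.ne i hi) ?_, hzF' 0 (by simp)⟩
    rw [hp.sum_mul_sum, hp.sum_mul _ hi]; simp [f]
  rcases hp.spec f (h1 hmem).1 with h | ⟨l, hl, h⟩
  · exact hzF' 0 (by simp) h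
  · by_cases hli : l = i
    · subst hli
      simp only [f, if_true] at h
      have h2 : (c l - 1) * (l + z) = 0 := by linear_combination h
      rcases mul_eq_zero.1 h2 with h3 | h3
      · exact hc1 (sub_eq_zero.1 h3)
      · exact hzF' 0 (by simp) (by rw [h3, mul_zero])
    · simp only [f, hli, if_false, add_zero] at h
      exact hzF' l (Finset.mem_insert_of_mem hl) h

lemma exclusion (hss : TwoSidedIdeal.jacobson (⊥ : TwoSidedIdeal A) = ⊥)
    {L : Finset ℂ} {p : ℂ → A} (hp : OrthoFam L p) {c : ℂ → ℂ}
    (hloc : ∀ᶠ u in 𝓝 (∑ l ∈ L, l • p l), (∑ l ∈ L, p l) * u = u →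
      nzSpec ((∑ l ∈ L, c l • p l) * u) ⊆ nzSpec u) {i j : ℂ} (hi : i ∈ L) (hj : j ∈ L)
    (hci : c i = 1) (hcj : c j = 0) (y : A) : p i * y * p j = 0 := by
  have hij : i ≠ j := by rintro rfl; rw [hci] at hcj; exact one_ne_zero hcj
  refine eq_zero_of_qn_mul hss fun s => ?_
  by_contra hnq
  obtain ⟨k, hk⟩ := hp.corner i hi (y * p j * s)
  have hk0 : k ≠ 0 := by
    rintro rfl
    apply hnq
    have h1 : QN (p i * (y * p j * s) * p i) := by
      rw [hk, zero_smul]; intro z hz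
      rcases subsingleton_or_nontrivial A with hA | hA
      · simp at hz
      · simpa using hz
    have h2 := h1.swap
    convert h2 using 1
    simp only [← mul_assoc, hp.idem i hi]
  set u0 := ∑ l ∈ L, l • p l with hu0
  set P := ∑ l ∈ L, p l with hP
  set α := ∑ l ∈ L, c l • p l with hα
  have hP' : P = ∑ l ∈ L, (1 : ℂ) • p l := by simp [hP]
  have hPu0 : P * u0 = u0 := by
    rw [hP', hu0, hp.sum_mul_sum]; simp
  have hPi : ∀ l ∈ L, P * p l = p l := fun l hl => by
    rw [hP', hp.sum_mul (fun _ => 1) hl, one_smul]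
  have hiP : ∀ l ∈ L, p l * P = p l := fun l hl => by
    rw [hP', hp.mul_sum (fun _ => 1) hl, one_smul]
  have oij := hp.ortho i hi j hj hij
  have oji := hp.ortho j hj i hi hij.symm
  obtain ⟨v, hv⟩ : ∃ v, v = p i * y * p j := ⟨_, rfl⟩
  obtain ⟨v', hv'⟩ : ∃ v', v' = k⁻¹ • (p j * s * p i) := ⟨_, rfl⟩
  have hvpi : v * p i = 0 := by rw [hv, mul_assoc, oji, mul_zero]
  have hpjv : p j * v = 0 := by rw [hv, ← mul_assoc, ← mul_assoc, oji, zero_mul, zero_mul]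
  have hv'pi : v' * p i = v' := by rw [hv', smul_mul_assoc, mul_assoc, hp.idem i hi]
  have hpiv : p i * v = v := by rw [hv, ← mul_assoc, ← mul_assoc, hp.idem i hi]
  have hvpj : v * p j = v := by rw [hv, mul_assoc, hp.idem j hj]
  have hpjv' : p j * v' = v' := by
    rw [hv', mul_smul_comm, ← mul_assoc, ← mul_assoc, hp.idem j hj]
  have hpiv' : p i * v' = 0 := by
    rw [← hpjv', ← mul_assoc, oij, zero_mul]
  have hvv' : v * v' = p i := by
    rw [hv, hv', mul_smul_comm]
    have : p i * y * p j * (p j * s * p i) = p i * (y * p j * s) * p i := by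
      calc p i * y * p j * (p j * s * p i) = p i * y * (p j * p j) * s * p i := by
            simp only [mul_assoc]
        _ = _ := by rw [hp.idem j hj]; simp only [mul_assoc]
    rw [this, hk, smul_smul, inv_mul_cancel₀ hk0, one_smul]
  have hvv : v * v = 0 := by rw [← hpiv, ← mul_assoc, mul_assoc (p i), hvpi]; simp
  have hvsq : v' * v' = 0 := by
    calc v' * v' = v' * p i * (p j * v') := by rw [hv'pi, hpjv']
      _ = v' * (p i * p j) * v' := by simp only [mul_assoc]
      _ = 0 := by rw [oij]; simp
  have hPv : Commute P v := by
    unfold Commute SemiconjBy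
    rw [← hpiv, ← mul_assoc, hPi i hi, mul_assoc, ← hvpj, mul_assoc v, hiP j hj]
  have hPv' : Commute P v' := by
    unfold Commute SemiconjBy
    rw [← hpjv', ← mul_assoc, hPi j hj, mul_assoc, ← hv'pi, mul_assoc v', hiP i hi]
  have hu0pi : u0 * p i = i • p i := hp.sum_mul (fun l => l) hi
  have hu0v' : u0 * v' = j • v' := by
    rw [← hpjv', ← mul_assoc, hu0, hp.sum_mul (fun l => l) hj, smul_mul_assoc]
  have hαpi : α * p i = p i := by rw [hα, hp.sum_mul c hi, hci, one_smul]
  have hαv' : α * v' = 0 := by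
    rw [← hpjv', ← mul_assoc, hα, hp.sum_mul c hj, hcj, zero_smul, zero_mul]
  let γ : ℂ := (i - j)⁻¹
  have hγ : γ * i - γ * j = 1 := by
    rw [← mul_sub]; exact inv_mul_cancel₀ (sub_ne_zero.2 hij)
  let U : ℂ → A := fun ε => (1 + ε • v) * ((1 + (γ * ε) • v') * u0 * (1 - (γ * ε) • v')) * (1 - ε • v)
  have hUc : Tendsto U (𝓝 0) (𝓝 u0) := by
    have : Continuous U := by fun_prop
    have := this.tendsto 0
    simpa [U] using this
  obtain ⟨δ, hδ, hball⟩ := Metric.eventually_nhds_iff.1 (hUc.eventually hloc)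
  obtain ⟨η, hη, hηF⟩ := exists_small_avoid ((insert 0 L).image (fun k => k - i))
    (δ := (δ / 2) ^ 2) (by positivity)
  obtain ⟨ε, hε⟩ := IsAlgClosed.exists_pow_nat_eq η (n := 2) (by norm_num)
  have hεδ : ‖ε‖ ≤ δ / 2 := by
    rw [← hε, norm_pow] at hη
    exact (pow_le_pow_iff_left₀ (norm_nonneg _) (by positivity) (by norm_num)).1 hη
  have hF : ∀ k ∈ insert 0 L, i + η ≠ k := by
    intro k hk he
    exact hηF (Finset.mem_image.2 ⟨k, hk, by rw [← he]; ring⟩)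
  have hPU : P * U ε = U ε := by
    have c1 : Commute P (1 + ε • v) := (Commute.one_right P).add_right (hPv.smul_right ε)
    have c2 : Commute P (1 + (γ * ε) • v') := (Commute.one_right P).add_right (hPv'.smul_right _)
    simp only [U]
    rw [← mul_assoc, ← mul_assoc, ← mul_assoc, ← mul_assoc, c1.eq, mul_assoc (1 + ε • v) P, c2.eq]
    rw [mul_assoc (1 + ε • v) _ u0, mul_assoc _ P u0, hPu0]
    simp only [mul_assoc]
  have hsubU := hball (y := ε) (by rw [dist_zero_right]; linarith) hPU
  have e1 : U ε * p i = (i + η) • p i + ε • v' := by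
    simp only [U]
    have s1 : (1 - ε • v) * p i = p i := by
      rw [sub_mul, smul_mul_assoc, hvpi, smul_zero, sub_zero, one_mul]
    have s2 : (1 - (γ * ε) • v') * p i = p i - (γ * ε) • v' := by
      rw [sub_mul, smul_mul_assoc, hv'pi, one_mul]
    have s3 : u0 * (p i - (γ * ε) • v') = i • p i - (γ * ε * j) • v' := by
      rw [mul_sub, hu0pi, mul_smul_comm, hu0v', smul_smul]
    have s4 : (1 + (γ * ε) • v') * (i • p i - (γ * ε * j) • v') = i • p i + ε • v' := by
      rw [add_mul, one_mul, smul_mul_assoc, mul_sub, mul_smul_comm, mul_smul_comm, hv'pi, hvsq,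
        smul_zero, sub_zero, smul_smul]
      have : ε = γ * ε * i - γ * ε * j := by linear_combination (-ε) * hγ
      have h' : ε • v' = (γ * ε * i) • v' - (γ * ε * j) • v' := by rw [← sub_smul, ← this]
      rw [h']; abel
    have s5 : (1 + ε • v) * (i • p i + ε • v') = (i + η) • p i + ε • v' := by
      rw [add_mul, one_mul, smul_mul_assoc, mul_add, mul_smul_comm, mul_smul_comm, hvpi, hvv',
        smul_zero, zero_add, smul_smul, add_smul, ← hε, sq]
      abel
    rw [mul_assoc, s1, mul_assoc, mul_assoc, mul_assoc, s2, s3, s4, s5]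
  have hmem : i + η ∈ nzSpec (α * U ε) := by
    refine ⟨mem_spec_of_eig (hp.ne i hi) ?_, hF 0 (by simp)⟩
    rw [mul_assoc, e1, mul_add, mul_smul_comm, mul_smul_comm, hαpi, hαv', smul_zero, add_zero]
  have h6 := (hsubU hmem).1
  simp only [U] at h6
  rw [spec_conj (by rw [smul_mul_smul_comm, hvv, smul_zero]),
    spec_conj (by rw [smul_mul_smul_comm, hvsq, smul_zero]), hu0] at h6
  rcases hp.spec (fun l => l) h6 with h | ⟨l, hl, h⟩
  · exact hF 0 (by simp) h
  · exact hF l (Finset.mem_insert_of_mem hl) h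

lemma alpha_comm (hss : TwoSidedIdeal.jacobson (⊥ : TwoSidedIdeal A) = ⊥)
    {L : Finset ℂ} {p : ℂ → A} (hp : OrthoFam L p) {c : ℂ → ℂ}
    (hloc : ∀ᶠ u in 𝓝 (∑ l ∈ L, l • p l), (∑ l ∈ L, p l) * u = u →
      nzSpec ((∑ l ∈ L, c l • p l) * u) ⊆ nzSpec u) (X : A) :
    (∑ l ∈ L, c l • p l) * X * (∑ l ∈ L, p l) = (∑ l ∈ L, p l) * X * (∑ l ∈ L, c l • p l) := by
  simp only [Finset.sum_mul, Finset.mul_sum]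
  refine Finset.sum_congr rfl fun j hj => Finset.sum_congr rfl fun i hi => ?_
  rw [smul_mul_assoc, smul_mul_assoc, mul_smul_comm]
  have h0 : ∀ i ∈ L, ∀ j ∈ L, c i = 1 → c j = 0 → p j * X * p i = 0 := by
    intro i hi j hj hci hcj
    refine eq_zero_of_qn_mul hss fun y => ?_
    have h1 : QN (X * p i * y * p j) := by
      have : X * p i * y * p j = 0 := by
        rw [mul_assoc, mul_assoc, ← mul_assoc (p i), exclusion hss hp hloc hi hj hci hcj y,
          mul_zero]
      rw [this]
      intro z hz
      rcases subsingleton_or_nontrivial A with hA | hA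
      · simp at hz
      · simpa using hz
    have := h1.swap
    convert this using 1; simp only [mul_assoc]
  rcases alpha_zero_one hp hloc hi with h1 | h1 <;> rcases alpha_zero_one hp hloc hj with h2 | h2
  · rw [h1, h2]
  · rw [h0 j hj i hi h2 h1, smul_zero, smul_zero]
  · rw [exclusion hss hp hloc hi hj h1 h2 X, smul_zero, smul_zero]
  · rw [h1, h2]

end Core

section Final
open Filter Topology
variable {A : Type*} [NormedRing A] [NormedAlgebra ℂ A] [CompleteSpace A]

lemma srank_one (hss : TwoSidedIdeal.jacobson (⊥ : TwoSidedIdeal A) = ⊥) {p b : A}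
    (hp : p * p = p) (hcor : ∀ y, ∃ c : ℂ, p * y * p = c • p) (hne : p * b ≠ 0) :
    srank (p * b) = 1 := by
  apply le_antisymm
  · refine iSup_le fun x => ?_
    rw [nzSpec_comm, mul_assoc]
    have e : p * (b * x) = p * (p * (b * x)) := by rw [← mul_assoc p p, hp]
    rw [e, nzSpec_comm]
    obtain ⟨c, hc⟩ := hcor (b * x)
    rw [hc]
    have hsub : nzSpec (c • p) ⊆ {c} := by
      rintro z ⟨hz, hz0⟩
      have h1 := spectrum.subset_polynomial_aeval (c • p)
        (Polynomial.X * Polynomial.X - Polynomial.C c * Polynomial.X : Polynomial ℂ) ⟨z, hz, rfl⟩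
      have h2 : Polynomial.aeval (c • p)
          (Polynomial.X * Polynomial.X - Polynomial.C c * Polynomial.X : Polynomial ℂ) = 0 := by
        simp only [map_sub, map_mul, Polynomial.aeval_X, Polynomial.aeval_C, ← Algebra.smul_def]
        rw [smul_mul_smul_comm, hp, smul_smul, sub_self]
      rw [h2] at h1
      have hz0' : z ≠ 0 := hz0
      rcases subsingleton_or_nontrivial A with hA | hA
      · simp at h1
      · simp at h1
        have h3 : z * (z - c) = 0 := by linear_combination h1
        rcases mul_eq_zero.1 h3 with h | h
        · exact absurd h hz0'
        · exact sub_eq_zero.1 h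
    calc (nzSpec (c • p)).encard ≤ ({c} : Set ℂ).encard := Set.encard_le_encard hsub
      _ = 1 := Set.encard_singleton c
  · by_contra hlt
    apply hne
    refine eq_zero_of_qn_mul hss fun x => ?_
    by_contra hq
    apply hlt
    unfold QN at hq
    push Not at hq
    obtain ⟨z, hz, hz0⟩ := hq
    refine le_trans ?_ (le_iSup (fun x => (nzSpec (x * (p * b))).encard) x)
    change 1 ≤ (nzSpec (x * (p * b))).encard
    rw [nzSpec_comm, Set.one_le_encard_iff_nonempty]
    exact ⟨z, hz, hz0⟩

lemma enumerate {ι M : Type*} [AddCommMonoid M] (S : Finset ι) (f : ι → M) :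
    ∃ c : ℕ → M, (∀ i < S.card, ∃ s ∈ S, c i = f s) ∧
      ∑ i ∈ Finset.range S.card, c i = ∑ s ∈ S, f s := by
  classical
  induction S using Finset.induction_on with
  | empty => exact ⟨fun _ => 0, by simp, by simp⟩
  | insert s S hs ih =>
    obtain ⟨c, hc1, hc2⟩ := ih
    refine ⟨fun i => if i < S.card then c i else f s, ?_, ?_⟩
    · intro i hi
      by_cases h : i < S.card
      · obtain ⟨t, ht, hct⟩ := hc1 i h
        exact ⟨t, Finset.mem_insert_of_mem ht, by simp [h, hct]⟩
      · exact ⟨s, Finset.mem_insert_self _ _, by simp [h]⟩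
    · rw [Finset.card_insert_of_notMem hs, Finset.sum_range_succ, Finset.sum_insert hs, add_comm,
        ← hc2]
      simp only [lt_irrefl, if_false]
      congr 1
      refine Finset.sum_congr rfl fun i hi => ?_
      simp [Finset.mem_range.1 hi]

lemma enumerate_two {ι M : Type*} [AddCommMonoid M] [DecidableEq ι] {S L : Finset ι} (hSL : S ⊆ L)
    (f : ι → M) :
    ∃ c : ℕ → M, (∀ i < L.card, ∃ s ∈ L, c i = f s) ∧
      ∑ i ∈ Finset.range S.card, c i = ∑ s ∈ S, f s ∧
      ∑ i ∈ Finset.range L.card, c i = ∑ s ∈ L, f s := by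
  obtain ⟨c, hc1, hc2⟩ := enumerate S f
  obtain ⟨d, hd1, hd2⟩ := enumerate (L \ S) f
  have hcard : L.card = S.card + (L \ S).card := by
    rw [add_comm, Finset.card_sdiff_add_card_eq_card hSL]
  have hs1 : ∑ i ∈ Finset.range S.card, (if i < S.card then c i else d (i - S.card)) =
      ∑ s ∈ S, f s := by
    rw [← hc2]
    exact Finset.sum_congr rfl fun i hi => by simp [Finset.mem_range.1 hi]
  refine ⟨fun i => if i < S.card then c i else d (i - S.card), ?_, hs1, ?_⟩
  · intro i hi
    by_cases h : i < S.card
    · obtain ⟨t, ht, hct⟩ := hc1 i h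
      exact ⟨t, hSL ht, by simp [h, hct]⟩
    · obtain ⟨t, ht, hct⟩ := hd1 (i - S.card) (by omega)
      exact ⟨t, (Finset.mem_sdiff.1 ht).1, by simp [h, hct]⟩
  · rw [hcard, Finset.sum_range_add, hs1]
    have : ∑ x ∈ Finset.range (L \ S).card,
        (if S.card + x < S.card then c (S.card + x) else d (S.card + x - S.card)) =
        ∑ s ∈ L \ S, f s := by
      rw [← hd2]
      exact Finset.sum_congr rfl fun i hi => by simp
    rw [this, add_comm, Finset.sum_sdiff hSL]

end Final

theorem portion_decomposition_of_nzSpec_subset_on_open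
    {A : Type*} [NormedRing A] [NormOneClass A] [NormedAlgebra ℂ A] [CompleteSpace A]
    (hss : JacobsonSemisimple A) (N : Set A) (hN : IsOpen N) (hNne : N.Nonempty)
    (a b : A)
    (hfin : ∀ x ∈ N, (spectrum ℂ (b * x)).Finite)
    (hsub : ∀ x ∈ N, nzSpec (a * x) ⊆ nzSpec (b * x)) :
    a * b = b * a ∧
    (a = 0 ∨ ∃ (n k : ℕ), k ≤ n ∧ ∃ c : ℕ → A, (∀ i < n, srank (c i) = 1) ∧
      a = ∑ i ∈ Finset.range k, c i ∧ b = ∑ i ∈ Finset.range n, c i) ∧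
    a * (b - a) = 0 ∧ (b - a) * a = 0 := by
  classical
  have hss' : TwoSidedIdeal.jacobson (⊥ : TwoSidedIdeal A) = ⊥ := hss
  obtain ⟨N', hN'N, hN'o, x0, hx0, L, hL, hmax⟩ := exists_good b hN hNne hfin
  obtain ⟨p, hp, hup, hpu⟩ := exists_orthoFam hss' b hN'o hx0 L hL hmax
  have hPb := range_b hss' b hN'o hx0 L hmax hp hup
  have hsub' : ∀ x ∈ N', nzSpec (a * x) ⊆ nzSpec (b * x) := fun x hx => hsub x (hN'N hx)
  have hPsum : ∑ l ∈ L, p l = ∑ l ∈ L, (1 : ℂ) • p l := by simp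
  have hPP : (∑ l ∈ L, p l) * (∑ l ∈ L, p l) = ∑ l ∈ L, p l := by
    rw [hPsum, hp.sum_mul_sum]; simp
  obtain ⟨w, hw⟩ : ∃ w, w = x0 * ∑ l ∈ L, l⁻¹ • p l := ⟨_, rfl⟩
  have hbw : b * w = ∑ l ∈ L, p l := by
    rw [hw, ← mul_assoc, Finset.mul_sum]
    refine Finset.sum_congr rfl fun l hl => ?_
    have hl0 : l ≠ 0 := by rintro rfl; exact hp.zero_notMem hl
    rw [mul_smul_comm, hup l hl, smul_smul, inv_mul_cancel₀ hl0, one_smul]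
  have hwP : w * (∑ l ∈ L, p l) = w := by
    rw [hw, mul_assoc, hPsum, hp.sum_mul_sum]; simp
  have hu0 : b * x0 = ∑ l ∈ L, l • p l := by
    calc b * x0 = (∑ l ∈ L, p l) * (b * x0) := by rw [← mul_assoc, hPb]
      _ = _ := by rw [Finset.sum_mul]; exact Finset.sum_congr rfl hpu
  have hPa : (∑ l ∈ L, p l) * a = a := by
    have := ann_a_left hss' a b hN'o hx0 L hL hsub' (y := 1 - ∑ l ∈ L, p l)
      (by rw [sub_mul, hPb, one_mul, sub_self])
    rw [sub_mul, one_mul, sub_eq_zero] at this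
    exact this.symm
  have hbwb : b * (w * b) = b := by rw [← mul_assoc, hbw, hPb]
  have hawb : a * w * b = a := by
    have := ann_a hss' a b hN'o hx0 L hL hsub' (y := 1 - w * b)
      (by rw [mul_sub, hbwb, mul_one, sub_self])
    rw [mul_sub, mul_one, sub_eq_zero, ← mul_assoc] at this
    exact this.symm
  have hloc : ∀ᶠ u in nhds (∑ l ∈ L, l • p l), (∑ l ∈ L, p l) * u = u →
      nzSpec (a * w * u) ⊆ nzSpec u := by
    have hc : Filter.Tendsto (fun u => x0 + w * (u - b * x0)) (nhds (∑ l ∈ L, l • p l))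
        (nhds x0) := by
      have : Continuous (fun u => x0 + w * (u - b * x0)) := by fun_prop
      have := this.tendsto (∑ l ∈ L, l • p l)
      rw [← hu0] at this ⊢
      simpa using this
    filter_upwards [hc.eventually (hN'o.mem_nhds hx0)] with u hu hPu
    have h1 := hsub' _ hu
    have e1 : b * (x0 + w * (u - b * x0)) = u := by
      rw [mul_add, ← mul_assoc, hbw, mul_sub, hPu, ← mul_assoc, hPb]; abel
    have e2 : a * (x0 + w * (u - b * x0)) = a * w * u := by
      rw [mul_add, mul_sub, mul_sub, ← mul_assoc a w u, ← mul_assoc w b, ← mul_assoc a,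
        ← mul_assoc a w b, hawb]
      abel
    rwa [e1, e2] at h1
  obtain ⟨c, hc⟩ := alpha_diag hss' hp (α := a * w) (by rw [← mul_assoc, hPa])
    (by rw [mul_assoc, hwP]) hloc
  rw [hc] at hloc hawb
  have h01 : ∀ i ∈ L, c i = 0 ∨ c i = 1 := fun i hi => alpha_zero_one hp hloc hi
  have hcomm := alpha_comm hss' hp hloc b
  have hαα : (∑ l ∈ L, c l • p l) * (∑ l ∈ L, c l • p l) = ∑ l ∈ L, c l • p l := by
    rw [hp.sum_mul_sum]
    refine Finset.sum_congr rfl fun l hl => ?_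
    rcases h01 l hl with h | h <;> simp [h]
  have hαS : ∑ l ∈ L, c l • p l = ∑ l ∈ L.filter (fun l => c l = 1), p l := by
    rw [Finset.sum_filter]
    refine Finset.sum_congr rfl fun l hl => ?_
    rcases h01 l hl with h | h <;> simp [h]
  set P := ∑ l ∈ L, p l with hP
  set α := ∑ l ∈ L, c l • p l with hα
  have hbα : b * α = α * b * P := by rw [hcomm, hPb]
  have hab : a * b = b * a := by
    calc a * b = α * b * (P * b) := by rw [hawb, hPb]
      _ = b * α * b := by rw [hbα]; simp only [mul_assoc]
      _ = b * a := by rw [mul_assoc, hawb]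
  have haa : a * a = a * b := by
    calc a * a = α * (b * α) * b := by
          conv_lhs => rw [← hawb]
          simp only [mul_assoc]
      _ = (α * α) * b * (P * b) := by rw [hbα]; simp only [mul_assoc]
      _ = a * b := by rw [hαα, hPb, hawb]
  refine ⟨hab, Or.inr ?_, ?_, ?_⟩
  · obtain ⟨d, hd1, hd2, hd3⟩ := enumerate_two (Finset.filter_subset (fun l => c l = 1) L)
      (fun l => p l * b)
    refine ⟨L.card, _, Finset.card_le_card (Finset.filter_subset (fun l => c l = 1) L), d, ?_, ?_,
      ?_⟩
    · intro i hi
      obtain ⟨l, hl, h⟩ := hd1 i hi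
      rw [h]
      refine srank_one hss' (hp.idem l hl) (hp.corner l hl) ?_
      intro h0
      apply hp.ne l hl
      have h1 : p l * P = p l := by
        rw [hPsum, hp.mul_sum (fun _ => 1) hl, one_smul]
      rw [← h1, ← hbw, ← mul_assoc, h0, zero_mul]
    · rw [hd2, ← Finset.sum_mul, ← hαS, hawb]
    · rw [hd3, ← Finset.sum_mul, hPb]
  · rw [mul_sub, haa, sub_self]
  · rw [sub_mul, haa, hab, sub_self]
end
end
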